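/- PA⁻ + IΣ₁ proves FRT^{<ω}(Σ₁): in every model M of PA⁻ + IΣ₁, for all e ≥ 1, k ≥ 1 and x in M there exists y in M such that every Σ₁-definable k-coloring of [y]^e has an M-finite homogeneous set of cardinality x. -/

import Mathlib

/- Shared development: first-order arithmetic in the language {0,1,+,·,<},
   the arithmetic hierarchy, fragments of arithmetic, and coded finite
   combinatorics inside models. -/

open FirstOrder Language

namespace ArithFC

/-- Function symbols of the language of arithmetic: 0, 1, +, ·. -/
inductive Func : ℕ → Type
  | zero : Func 0
  | one : Func 0
  | add : Func 2
  | mul : Func 2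

/-- Relation symbols of the language of arithmetic: <. -/
inductive Rel : ℕ → Type
  | lt : Rel 2

/-- The first-order language {0, 1, +, ·, <}. -/
def lang : Language :=
  { Functions := Func, Relations := Rel }

section Instances

variable (M : Type) [lang.Structure M]

instance : Zero M := ⟨Structure.funMap (L := lang) Func.zero ![]⟩
instance : One M := ⟨Structure.funMap (L := lang) Func.one ![]⟩
instance : Add M := ⟨fun x y => Structure.funMap (L := lang) Func.add ![x, y]⟩
instance : Mul M := ⟨fun x y => Structure.funMap (L := lang) Func.mul ![x, y]⟩
instance : LT M := ⟨fun x y => Structure.RelMap (L := lang) Rel.lt ![x, y]⟩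
instance : LE M := ⟨fun x y => x < y ∨ x = y⟩

end Instances

/-- The numeral `n` in a model. -/
def numM (M : Type) [lang.Structure M] : ℕ → M
  | 0 => 0
  | n + 1 => numM M n + 1

/-- `b` is nonstandard (greater than every numeral). -/
def Nonstd {M : Type} [lang.Structure M] (b : M) : Prop := ∀ n : ℕ, numM M n < b

/-- The atomic formula `t < u`. -/
def ltFm {α : Type} {n : ℕ} (t u : lang.Term (α ⊕ Fin n)) : lang.BoundedFormula α n :=
  BoundedFormula.rel (Rel.lt : lang.Relations 2) ![t, u]

/-- Δ₀ formulas: built from atomic formulas by boolean connectives and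
bounded universal quantification (this generates, up to logical equivalence,
the usual class of bounded formulas). -/
inductive IsDelta0 {α : Type} : ∀ n : ℕ, lang.BoundedFormula α n → Prop
  | falsum (n : ℕ) : IsDelta0 n BoundedFormula.falsum
  | equal (n : ℕ) (t u : lang.Term (α ⊕ Fin n)) : IsDelta0 n (BoundedFormula.equal t u)
  | rel (n l : ℕ) (R : lang.Relations l) (ts : Fin l → lang.Term (α ⊕ Fin n)) :
      IsDelta0 n (BoundedFormula.rel R ts)
  | imp (n : ℕ) {φ ψ : lang.BoundedFormula α n} :
      IsDelta0 n φ → IsDelta0 n ψ → IsDelta0 n (φ.imp ψ)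
  | bdAll (n : ℕ) (t : lang.Term (α ⊕ Fin n)) {φ : lang.BoundedFormula α (n + 1)} :
      IsDelta0 (n + 1) φ →
      IsDelta0 n
        (BoundedFormula.all ((ltFm (Term.var (Sum.inr (Fin.last n))) (t.liftAt 1 n)).imp φ))

mutual
  /-- Σ_m formulas. -/
  inductive SigmaFm {α : Type} : ℕ → ∀ n : ℕ, lang.BoundedFormula α n → Prop
    | delta0 (m n : ℕ) {φ : lang.BoundedFormula α n} : IsDelta0 n φ → SigmaFm m n φ
    | ofPi (m n : ℕ) {φ : lang.BoundedFormula α n} : PiFm m n φ → SigmaFm (m + 1) n φ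
    | ex (m n : ℕ) {φ : lang.BoundedFormula α (n + 1)} :
        SigmaFm (m + 1) (n + 1) φ → SigmaFm (m + 1) n φ.ex
  /-- Π_m formulas. -/
  inductive PiFm {α : Type} : ℕ → ∀ n : ℕ, lang.BoundedFormula α n → Prop
    | delta0 (m n : ℕ) {φ : lang.BoundedFormula α n} : IsDelta0 n φ → PiFm m n φ
    | ofSigma (m n : ℕ) {φ : lang.BoundedFormula α n} : SigmaFm m n φ → PiFm (m + 1) n φ
    | all (m n : ℕ) {φ : lang.BoundedFormula α (n + 1)} :
        PiFm (m + 1) (n + 1) φ → PiFm (m + 1) n φ.all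
end

/-- A `k`-ary relation on `M` is Σ_m-definable (with parameters from `M`). -/
def IsSigmaDef (m : ℕ) (M : Type) [lang.Structure M] {k : ℕ} (R : (Fin k → M) → Prop) : Prop :=
  ∃ (p : ℕ) (φ : lang.BoundedFormula (Fin k ⊕ Fin p) 0) (w : Fin p → M),
    SigmaFm m 0 φ ∧ ∀ v : Fin k → M, R v ↔ φ.Realize (Sum.elim v w) finZeroElim

/-- A subset of `M` is Σ_m-definable with parameters. -/
def SigmaDef1 (m : ℕ) (M : Type) [lang.Structure M] (A : Set M) : Prop :=
  IsSigmaDef m M (k := 1) fun v => v 0 ∈ A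

/-- A binary relation on `M` is Σ_m-definable with parameters. -/
def SigmaDef2 (m : ℕ) (M : Type) [lang.Structure M] (R : M → M → Prop) : Prop :=
  IsSigmaDef m M (k := 2) fun v => R (v 0) (v 1)

/-- A ternary relation on `M` is Σ_m-definable with parameters. -/
def SigmaDef3 (m : ℕ) (M : Type) [lang.Structure M] (R : M → M → M → Prop) : Prop :=
  IsSigmaDef m M (k := 3) fun v => R (v 0) (v 1) (v 2)

/-- `M` is a model of PA⁻ (the nonnegative part of a discretely ordered
commutative semiring). -/
structure PAm (M : Type) [lang.Structure M] : Prop where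
  add_assoc : ∀ x y z : M, x + y + z = x + (y + z)
  add_comm : ∀ x y : M, x + y = y + x
  mul_assoc : ∀ x y z : M, x * y * z = x * (y * z)
  mul_comm : ∀ x y : M, x * y = y * x
  ldistrib : ∀ x y z : M, x * (y + z) = x * y + x * z
  add_zero : ∀ x : M, x + 0 = x
  mul_zero : ∀ x : M, x * 0 = 0
  mul_one : ∀ x : M, x * 1 = x
  lt_trans : ∀ x y z : M, x < y → y < z → x < z
  lt_irrefl : ∀ x : M, ¬x < x
  lt_total : ∀ x y : M, x < y ∨ x = y ∨ y < x
  add_lt_add : ∀ x y z : M, x < y → x + z < y + z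
  mul_lt_mul : ∀ x y z : M, x < y → 0 < z → x * z < y * z
  sub_exists : ∀ x y : M, x < y → ∃ z, x + z = y
  zero_lt_one : (0 : M) < 1
  discrete : ∀ x : M, 0 < x → (1 : M) ≤ x
  zero_le : ∀ x : M, (0 : M) ≤ x

/-- `M` satisfies the Σ_m-induction scheme (with parameters). -/
def ISig (m : ℕ) (M : Type) [lang.Structure M] : Prop :=
  ∀ A : Set M, SigmaDef1 m M A → (0 : M) ∈ A → (∀ x, x ∈ A → x + 1 ∈ A) → ∀ x, x ∈ A

/-- `M` satisfies the Σ_m-collection (bounding) scheme (with parameters). -/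
def BSig (m : ℕ) (M : Type) [lang.Structure M] : Prop :=
  ∀ R : M → M → Prop, SigmaDef2 m M R → ∀ a : M,
    (∀ x, x < a → ∃ y, R x y) → ∃ b, ∀ x, x < a → ∃ y, y < b ∧ R x y

section Coding

variable {M : Type} [lang.Structure M]

/-- `z` is the Cantor pair `⟨x, y⟩`: `2z = (x+y)(x+y+1) + 2y`. -/
def IsPairC (z x y : M) : Prop := z + z = (x + y) * (x + y + 1) + (y + y)

/-- Gödel's β-function: `x = a mod ((i+1)·b + 1)`. -/
def BetaC (a b i x : M) : Prop :=
  x < (i + 1) * b + 1 ∧ ∃ q, a = q * ((i + 1) * b + 1) + x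

/-- The sequence coded by `s` (via a Cantor pair of β-function data) has value `x`
at place `i`. -/
def SeqAt (s i x : M) : Prop := ∃ a b, IsPairC s a b ∧ BetaC a b i x

/-- `c` codes the M-finite set `X` of cardinality `card`: `c = ⟨card, s⟩` where `s`
codes the strictly increasing enumeration of `X` of length `card`. -/
def CodesFinset (c : M) (X : Set M) (card : M) : Prop :=
  ∃ s, IsPairC c card s ∧
    (∀ i, i < card → ∃ x, x ∈ X ∧ SeqAt s i x) ∧
    (∀ i j x y, i < j → j < card → SeqAt s i x → SeqAt s j y → x < y) ∧
    (∀ x, x ∈ X ↔ ∃ i, i < card ∧ SeqAt s i x)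

/-- `X` is an M-finite (coded) set. -/
def MFinite (X : Set M) : Prop := ∃ c card : M, CodesFinset c X card

/-- `d` codes an `e`-element subset `D` of `[0, y)`, i.e. an element of `[y]^e`. -/
def CodesTupleIn (d e y : M) (D : Set M) : Prop :=
  CodesFinset d D e ∧ ∀ z ∈ D, z < y

/-- `f` codes a (finite) function defined on all of `[0, a)`. -/
def CodesFunOn (f a : M) : Prop :=
  ∀ x, x < a → (∃ y, SeqAt f x y) ∧ ∀ y y', SeqAt f x y → SeqAt f x y' → y = y'

/-- `X` is an M-coded subset of `[0, a)`. -/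
def MCodedSubset (a : M) (X : Set M) : Prop :=
  MFinite X ∧ ∀ x ∈ X, x < a

end Coding

/-- An `M`-ultrafilter on `a`: an ultrafilter of the Boolean algebra of
M-finite subsets of `[0, a)`. -/
structure MUltra (M : Type) [lang.Structure M] (a : M) where
  sets : Set (Set M)
  mem_coded : ∀ X ∈ sets, MCodedSubset a X
  univ_mem : {x : M | x < a} ∈ sets
  superset_mem : ∀ X Y : Set M, X ∈ sets → MCodedSubset a Y → X ⊆ Y → Y ∈ sets
  inter_mem : ∀ X Y : Set M, X ∈ sets → Y ∈ sets → X ∩ Y ∈ sets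
  empty_not_mem : (∅ : Set M) ∉ sets
  ultra : ∀ X : Set M, MCodedSubset a X → X ∈ sets ∨ {x : M | x < a ∧ x ∉ X} ∈ sets

section Principles

variable (M : Type) [lang.Structure M]

/-- `F` is (the graph of) a Σ_m-definable injection from `[0, y)` into `[0, x)`. -/
def SigmaInjRel (m : ℕ) (F : M → M → Prop) (y x : M) : Prop :=
  SigmaDef2 m M F ∧
    (∀ u, u < y → ∃ v, v < x ∧ F u v) ∧
    (∀ u v v', u < y → F u v → F u v' → v = v') ∧
    (∀ u u' v, u < y → u' < y → F u v → F u' v → u = u')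

/-- There exists a Σ_m-definable injection from `[0, y)` into `[0, x)`. -/
def ExSigmaInj (m : ℕ) (y x : M) : Prop := ∃ F : M → M → Prop, SigmaInjRel M m F y x

/-- There exists a Σ_m-definable injection from all of `M` into `[0, a)`. -/
def SigmaInjWhole (m : ℕ) (a : M) : Prop :=
  ∃ F : M → M → Prop, SigmaDef2 m M F ∧
    (∀ u, ∃ v, v < a ∧ F u v) ∧
    (∀ u v v', F u v → F u v' → v = v') ∧
    (∀ u u' v, F u v → F u' v → u = u')

/-- CARD(Σ_m): no Σ_m-definable multivalued map sends `M` injectively below `a`. -/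
def CARD (m : ℕ) : Prop :=
  ∀ F : M → M → Prop, SigmaDef2 m M F → ∀ a : M,
    (∀ x, ∃ y, y < a ∧ F x y) →
      ∃ x0 x1 y, x0 ≠ x1 ∧ y < a ∧ F x0 y ∧ F x1 y

/-- GPHP(Σ_m): for every `x` there is `y` with no Σ_m-definable injection of
`[0,y)` into `[0,x)`. -/
def GPHP (m : ℕ) : Prop := ∀ x : M, ∃ y : M, ¬ExSigmaInj M m y x

/-- WPHP(Σ_m): for `x > 0` there is no Σ_m-definable injection of `[0,2x)` into `[0,x)`. -/
def WPHP (m : ℕ) : Prop := ∀ x : M, 0 < x → ¬ExSigmaInj M m (x + x) x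

/-- `C` is a Σ_m-definable `k`-coloring of `[y]^e` (acting on codes of
`e`-element subsets of `[0,y)`, independently of the chosen code). -/
def IsColoring (m : ℕ) (e y k : M) (C : M → M → Prop) : Prop :=
  SigmaDef2 m M C ∧
    (∀ d D, CodesTupleIn d e y D → ∃ i, i < k ∧ C d i) ∧
    (∀ d d' D i i', CodesTupleIn d e y D → CodesTupleIn d' e y D → C d i → C d' i' → i = i')

/-- FRT^e_k(Σ_m): every Σ_m-definable `k`-coloring of some `[y]^e` has an
M-finite homogeneous set of cardinality `x`, for every `x`. -/
def FRT (m : ℕ) (e k : M) : Prop :=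
  ∀ x : M, ∃ y : M, ∀ C : M → M → Prop, IsColoring M m e y k C →
    ∃ (c : M) (H : Set M), CodesFinset c H x ∧ (∀ z ∈ H, z < y) ∧
      ∃ i, ∀ d D, CodesFinset d D e → D ⊆ H → C d i

/-- fairFRT^e_k(Σ_m): the homogeneous set is required to be given as the range of a
Σ_m-definable injection from `[0,x)` into `[0,y)`. -/
def FairFRT (m : ℕ) (e k : M) : Prop :=
  ∀ x : M, ∃ y : M, ∀ C : M → M → Prop, IsColoring M m e y k C →
    ∃ H : M → M → Prop, SigmaInjRel M m H x y ∧
      ∃ i, ∀ d D, CodesFinset d D e → (∀ z ∈ D, ∃ u, u < x ∧ H u z) → C d i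

/-- `C` is a Σ_m-definable `k`-coloring of `[0, y)`. -/
def IsColoring1 (m : ℕ) (y k : M) (C : M → M → Prop) : Prop :=
  SigmaDef2 m M C ∧
    (∀ z, z < y → ∃ i, i < k ∧ C z i) ∧
    (∀ z i i', z < y → C z i → C z i' → i = i')

/-- FRT¹_k(Σ_m): every Σ_m-definable `k`-coloring of some `[0,y)` has an M-finite
homogeneous set of cardinality `x`, for every `x`. -/
def FRT1 (m : ℕ) (k : M) : Prop :=
  ∀ x : M, ∃ y : M, ∀ C : M → M → Prop, IsColoring1 M m y k C →
    ∃ (c : M) (H : Set M), CodesFinset c H x ∧ (∀ z ∈ H, z < y) ∧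
      ∃ i, ∀ z ∈ H, C z i

/-- fairFRT¹_k(Σ_m). -/
def FairFRT1 (m : ℕ) (k : M) : Prop :=
  ∀ x : M, ∃ y : M, ∀ C : M → M → Prop, IsColoring1 M m y k C →
    ∃ H : M → M → Prop, SigmaInjRel M m H x y ∧
      ∃ i, ∀ u v, u < x → H u v → C v i

end Principles

section Approx

variable {M : Type} [lang.Structure M]

/-- `f` is (the graph of) a partial function. -/
def IsPartialFun (f : M → M → Prop) : Prop := ∀ x y y', f x y → f x y' → y = y'

/-- `s` codes an approximation to the partial function `f` of length `b`. -/
def IsApprox (f : M → M → Prop) (s b : M) : Prop :=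
  (∀ i, i < b → ∃ v, SeqAt s i v) ∧
    (∀ i u v x y, i + 1 < b → SeqAt s i u → SeqAt s (i + 1) v → x ≤ u → f x y → y ≤ v)

/-- `s` codes a `g`-stretched approximation to the partial function `f` of length `b`. -/
def IsStretchedApprox (f g : M → M → Prop) (s b : M) : Prop :=
  (∀ i, i < b → ∃ v, SeqAt s i v) ∧
    (∀ i u w v x y, i + 1 < b → SeqAt s i u → g u w → SeqAt s (i + 1) v →
      x ≤ w → f x y → y ≤ v)

/-- The eventual (limit) value of `fun s => h s ·` is `x`. -/
def EvLim (h : M → M → Prop) (x : M) : Prop := ∃ s : M, ∀ t, s < t → h t x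

end Approx

/-- PΣ_m: every partial Σ_m-definable function admits approximations of every length. -/
def PSig (m : ℕ) (M : Type) [lang.Structure M] : Prop :=
  ∀ f : M → M → Prop, SigmaDef2 m M f → IsPartialFun f → ∀ b : M, ∃ s, IsApprox f s b

section Extensions

variable (M N : Type) [lang.Structure M] [lang.Structure N]

/-- `g : M → N` is Σ_m-elementary: Σ_m formulas with parameters from `M` transfer. -/
def SigmaElem (m : ℕ) (g : M → N) : Prop :=
  ∀ (p : ℕ) (φ : lang.BoundedFormula (Fin p) 0), SigmaFm m 0 φ →
    ∀ v : Fin p → M, (φ.Realize v finZeroElim ↔ φ.Realize (g ∘ v) finZeroElim)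

/-- The extension `g : M → N` is cofinal. -/
def Cofinal (g : M → N) : Prop := ∀ z : N, ∃ x : M, z ≤ g x

/-- `[0,a]^M = [0,a]^N`: every element of `N` below `g a` comes from `M`. -/
def SameBelow (g : M → N) (a : M) : Prop := ∀ z : N, z ≤ g a → ∃ x : M, g x = z

end Extensions

section Ramsey

variable {M : Type} [lang.Structure M]

/-- `f` is an M-coded `k`-coloring of `[y]^e` (assigning colors to codes of
`e`-subsets of `[0,y)`, independently of the code). -/
def CodedColoring (f e y k : M) : Prop :=
  (∀ d D, CodesTupleIn d e y D → ∃ i, i < k ∧ SeqAt f d i) ∧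
    (∀ d d' D i i', CodesTupleIn d e y D → CodesTupleIn d' e y D →
      SeqAt f d i → SeqAt f d' i' → i = i')

/-- The coded coloring `f` of `[y]^e` has an M-coded homogeneous set of cardinality `x`. -/
def CodedHomog (f e y x : M) : Prop :=
  ∃ (c : M) (H : Set M), CodesFinset c H x ∧ (∀ z ∈ H, z < y) ∧
    ∃ i, ∀ d D, CodesFinset d D e → D ⊆ H → SeqAt f d i

/-- `y = r(x, e, k)`: `y` is the least size guaranteeing coded homogeneous sets of
cardinality `x` for all coded `k`-colorings of `e`-subsets. -/
def IsRamsey (x e k y : M) : Prop :=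
  (∀ f, CodedColoring f e y k → CodedHomog f e y x) ∧
    (∀ y', y' < y → ∃ f, CodedColoring f e y' k ∧ ¬CodedHomog f e y' x)

/-- `y = r^(b)(x, e, k)`: the `b`-th iterate of the Ramsey function inside `M`. -/
def IterRamsey (x e k b y : M) : Prop :=
  ∃ s : M, SeqAt s 0 x ∧ SeqAt s b y ∧ (∀ i, i ≤ b → ∃ u, SeqAt s i u) ∧
    (∀ i u v, i < b → SeqAt s i u → SeqAt s (i + 1) v → IsRamsey u e k v)

end Ramsey

end ArithFC


namespace FRTAbs

/-! ## Semantic bounded formulas -/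

/-- Polynomial terms with parameters, as functions of `n` variables. -/
inductive VTm (M : Type) [Add M] [Mul M] : (n : ℕ) → ((Fin n → M) → M) → Prop
  | var (n : ℕ) (i : Fin n) : VTm M n (fun v => v i)
  | const (n : ℕ) (c : M) : VTm M n (fun _ => c)
  | add (n : ℕ) {t u : (Fin n → M) → M} : VTm M n t → VTm M n u → VTm M n (fun v => t v + u v)
  | mul (n : ℕ) {t u : (Fin n → M) → M} : VTm M n t → VTm M n u → VTm M n (fun v => t v * u v)

/-- Bounded predicates with parameters, as predicates of `n` variables. -/
inductive VD0 (M : Type) [Add M] [Mul M] [LT M] : (n : ℕ) → ((Fin n → M) → Prop) → Prop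
  | fls (n : ℕ) : VD0 M n (fun _ => False)
  | eq (n : ℕ) {t u : (Fin n → M) → M} : VTm M n t → VTm M n u → VD0 M n (fun v => t v = u v)
  | lt (n : ℕ) {t u : (Fin n → M) → M} : VTm M n t → VTm M n u → VD0 M n (fun v => t v < u v)
  | imp (n : ℕ) {P Q : (Fin n → M) → Prop} : VD0 M n P → VD0 M n Q → VD0 M n (fun v => P v → Q v)
  | ball (n : ℕ) {t : (Fin n → M) → M} {P : (Fin (n + 1) → M) → Prop} :
      VTm M n t → VD0 M (n + 1) P →
      VD0 M n (fun v => ∀ z, z < t v → P (Fin.snoc (α := fun _ => M) v z))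

/-- Models of `PA⁻ + IΣ₁`, with the order and the semiring structure bundled. -/
class IS1 (M : Type) extends CommSemiring M, LinearOrder M, IsStrictOrderedRing M,
    CanonicallyOrderedAdd M where
  lt_one : ∀ x : M, x < 1 → x = 0
  ind : ∀ P : (Fin 2 → M) → Prop, VD0 M 2 P →
    (∃ z, P ![0, z]) → (∀ x, (∃ z, P ![x, z]) → ∃ z, P ![x + 1, z]) → ∀ x, ∃ z, P ![x, z]

section VLemmas
variable {M : Type} [Add M] [Mul M] [LT M]

theorem VTm.subst {n : ℕ} {t : (Fin n → M) → M} (h : VTm M n t) {m : ℕ}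
    (r : (Fin m → M) → (Fin n → M)) (hr : ∀ i, VTm M m (fun v => r v i)) :
    VTm M m (fun v => t (r v)) := by
  induction h with
  | var i => exact hr i
  | const c => exact .const _ _
  | add _ _ h1 h2 => exact .add _ h1 h2
  | mul _ _ h1 h2 => exact .mul _ h1 h2

theorem VTm.lift {n : ℕ} {t : (Fin n → M) → M} (h : VTm M n t) :
    VTm M (n + 1) (fun v => t (fun i => v i.castSucc)) :=
  h.subst (fun (v : Fin (n+1) → M) i => v i.castSucc) (fun _ => .var _ _)

theorem VD0.subst {n : ℕ} {P : (Fin n → M) → Prop} (h : VD0 M n P) : ∀ {m : ℕ}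
    (r : (Fin m → M) → (Fin n → M)), (∀ i, VTm M m (fun v => r v i)) →
    VD0 M m (fun v => P (r v)) := by
  induction h with
  | fls n => intro m r hr; exact .fls _
  | eq n h1 h2 => intro m r hr; exact .eq _ (h1.subst r hr) (h2.subst r hr)
  | lt n h1 h2 => intro m r hr; exact .lt _ (h1.subst r hr) (h2.subst r hr)
  | imp n _ _ h1 h2 => intro m r hr; exact .imp _ (h1 r hr) (h2 r hr)
  | @ball n t P ht hP ih =>
    intro m r hr
    have := VD0.ball (M := M) m (ht.subst r hr)
      (ih (fun (v : Fin (m+1) → M) => Fin.snoc (α := fun _ => M) (r (fun i => v i.castSucc)) (v (Fin.last m)))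
        (by
          intro i
          refine Fin.lastCases ?_ (fun j => ?_) i
          · simpa using VTm.var (M := M) _ _
          · simpa using (hr j).lift))
    simpa using this

end VLemmas

/-! ## Environments -/

class Env (M : outParam Type) (Γ : Type) where
  dim : ℕ
  vec : Γ → Fin dim → M

variable {M : Type} [IS1 M]

instance envBase : Env M M := ⟨1, fun x _ => x⟩
instance envProd {Γ : Type} [Env M Γ] : Env M (Γ × M) :=
  ⟨Env.dim Γ + 1, fun p => Fin.snoc (α := fun _ => M) (Env.vec p.1) p.2⟩

variable {Γ Δ : Type} [Env M Γ] [Env M Δ]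

def Tm (f : Γ → M) : Prop := ∃ f', VTm M (Env.dim Γ) f' ∧ ∀ γ, f γ = f' (Env.vec γ)
def D0 (P : Γ → Prop) : Prop := ∃ P', VD0 M (Env.dim Γ) P' ∧ ∀ γ, P γ ↔ P' (Env.vec γ)

theorem Tm.const (c : M) : Tm (fun _ : Γ => c) := ⟨_, .const _ c, fun _ => rfl⟩
theorem Tm.add {f g : Γ → M} : Tm f → Tm g → Tm (fun γ => f γ + g γ)
  | ⟨f', hf, ef⟩, ⟨g', hg, eg⟩ => ⟨_, .add _ hf hg, fun γ => by simp [ef, eg]⟩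
theorem Tm.mul {f g : Γ → M} : Tm f → Tm g → Tm (fun γ => f γ * g γ)
  | ⟨f', hf, ef⟩, ⟨g', hg, eg⟩ => ⟨_, .mul _ hf hg, fun γ => by simp [ef, eg]⟩
theorem Tm.base : Tm (fun x : M => x) := ⟨_, .var _ ⟨0, by simp [Env.dim]⟩, fun _ => rfl⟩
theorem Tm.snd : Tm (fun p : Γ × M => p.2) :=
  ⟨_, .var _ (Fin.last (Env.dim Γ)), fun γ => by simp [Env.vec]⟩
theorem Tm.fst {f : Γ → M} : Tm f → Tm (fun p : Γ × M => f p.1)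
  | ⟨f', hf, ef⟩ => ⟨_, hf.lift, fun γ => by simp [ef, Env.vec]⟩

theorem D0.fls : D0 (fun _ : Γ => False) := ⟨_, .fls _, fun _ => Iff.rfl⟩
theorem D0.eq {f g : Γ → M} : Tm f → Tm g → D0 (fun γ => f γ = g γ)
  | ⟨f', hf, ef⟩, ⟨g', hg, eg⟩ => ⟨_, .eq _ hf hg, fun γ => by simp [ef, eg]⟩
theorem D0.lt {f g : Γ → M} : Tm f → Tm g → D0 (fun γ => f γ < g γ)
  | ⟨f', hf, ef⟩, ⟨g', hg, eg⟩ => ⟨_, .lt _ hf hg, fun γ => by simp [ef, eg]⟩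
theorem D0.imp {P Q : Γ → Prop} : D0 P → D0 Q → D0 (fun γ => P γ → Q γ)
  | ⟨f', hf, ef⟩, ⟨g', hg, eg⟩ => ⟨_, .imp _ hf hg, fun γ => by simp [ef, eg]⟩
theorem D0.ball {t : Γ → M} {P : Γ → M → Prop} (ht : Tm t) (hP : D0 (fun p : Γ × M => P p.1 p.2)) :
    D0 (fun γ => ∀ z, z < t γ → P γ z) := by
  obtain ⟨t', ht, et⟩ := ht
  obtain ⟨P', hP, eP⟩ := hP
  refine ⟨_, .ball _ ht hP, fun γ => ?_⟩
  simp only [et]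
  exact forall_congr' fun z => imp_congr_right fun _ => eP (γ, z)
theorem D0.congr {P Q : Γ → Prop} (h : D0 P) (e : ∀ γ, Q γ ↔ P γ) : D0 Q := by
  obtain ⟨P', hP, eP⟩ := h
  exact ⟨P', hP, fun γ => (e γ).trans (eP γ)⟩
theorem D0.not {P : Γ → Prop} (h : D0 P) : D0 (fun γ => ¬ P γ) := h.imp D0.fls
theorem D0.and {P Q : Γ → Prop} (h : D0 P) (h' : D0 Q) : D0 (fun γ => P γ ∧ Q γ) :=
  (h.imp h'.not).not.congr fun γ => by tauto
theorem D0.or {P Q : Γ → Prop} (h : D0 P) (h' : D0 Q) : D0 (fun γ => P γ ∨ Q γ) :=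
  (h.not.imp h').congr fun γ => by tauto
theorem D0.bex {t : Γ → M} {P : Γ → M → Prop} (ht : Tm t) (hP : D0 (fun p : Γ × M => P p.1 p.2)) :
    D0 (fun γ => ∃ z, z < t γ ∧ P γ z) :=
  (D0.ball (P := fun γ z => ¬ P γ z) ht hP.not).not.congr fun γ => by push Not; rfl

/-- Maps all of whose coordinates are terms. -/
def TmMap (r : Γ → Δ) : Prop := ∀ i, Tm (fun γ => Env.vec (r γ) i)

theorem TmMap.base {f : Γ → M} (h : Tm f) : TmMap f := fun _ => h
theorem TmMap.prod {r : Γ → Δ} {f : Γ → M} (h : TmMap r) (h' : Tm f) :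
    TmMap (fun γ => (r γ, f γ)) := by
  intro i
  refine Fin.lastCases ?_ (fun j => ?_) i
  · simpa [Env.vec] using h'
  · simpa [Env.vec] using h j
theorem TmMap.fst {r : Γ → Δ} (h : TmMap r) : TmMap (fun p : Γ × M => r p.1) :=
  fun i => (h i).fst
theorem TmMap.id : TmMap (fun γ : Γ => γ) := fun i => ⟨_, .var _ i, fun _ => rfl⟩

theorem D0.ren {P : Δ → Prop} (h : D0 P) {r : Γ → Δ} (hr : TmMap r) : D0 (fun γ => P (r γ)) := by
  obtain ⟨P', hP, eP⟩ := h
  choose f hf ef using hr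
  refine ⟨_, hP.subst (fun v i => f i v) hf, fun γ => ?_⟩
  simp only [eP, ← ef]

theorem Tm.ren {t : Δ → M} (h : Tm t) {r : Γ → Δ} (hr : TmMap r) : Tm (fun γ => t (r γ)) := by
  obtain ⟨P', hP, eP⟩ := h
  choose f hf ef using hr
  refine ⟨_, hP.subst (fun v i => f i v) hf, fun γ => ?_⟩
  simp only [eP, ← ef]

/-! ## Σ₁ predicates -/

class Sig (P : Γ → Prop) : Prop where
  out : ∃ Q : Γ → M → Prop, D0 (fun p : Γ × M => Q p.1 p.2) ∧ ∀ γ, P γ ↔ ∃ z, Q γ z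

theorem lt_succ {x y : M} : x < y + 1 ↔ x ≤ y := by
  constructor
  · intro h
    by_contra hc
    push Not at hc
    obtain ⟨c, rfl⟩ := exists_add_of_le hc.le
    have : c < 1 := by grind
    have := IS1.lt_one c this
    subst this
    simp at hc
  · intro h
    have : (0:M) < 1 := zero_lt_one
    grind

theorem Sig.congr {P Q : Γ → Prop} (h : Sig P) (e : ∀ γ, Q γ ↔ P γ) : Sig Q := by
  obtain ⟨P', hP, eP⟩ := h
  exact ⟨P', hP, fun γ => (e γ).trans (eP γ)⟩

theorem Sig.ofD0 {P : Γ → Prop} (h : D0 P) : Sig P :=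
  ⟨fun γ _ => P γ, h.ren (TmMap.id.fst), fun γ => by simp⟩

theorem Sig.ren {P : Δ → Prop} (h : Sig P) {r : Γ → Δ} (hr : TmMap r) : Sig (fun γ => P (r γ)) := by
  obtain ⟨P', hP, eP⟩ := h
  exact ⟨fun γ z => P' (r γ) z, hP.ren (r := fun p : Γ × M => (r p.1, p.2)) (hr.fst.prod .snd), fun γ => eP _⟩

theorem Sig.ex {P : Γ → M → Prop} (h : Sig (fun p : Γ × M => P p.1 p.2)) :
    Sig (fun γ => ∃ z, P γ z) := by
  obtain ⟨P', hP, eP⟩ := h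
  refine ⟨fun γ b => ∃ z, z < b ∧ ∃ w, w < b ∧ P' (γ, z) w, ?_, fun γ => ?_⟩
  · refine D0.bex .snd (D0.bex (Tm.snd.fst) ?_)
    exact hP.ren (r := fun p : ((Γ × M) × M) × M => ((p.1.1.1, p.1.2), p.2))
      ((((TmMap.id.fst).fst.fst).prod (Tm.snd.fst)).prod .snd)
  · constructor
    · rintro ⟨z, hz⟩
      obtain ⟨w, hw⟩ := (eP (γ, z)).1 hz
      exact ⟨max z w + 1, z, by rw [lt_succ]; simp, w, by rw [lt_succ]; simp, hw⟩
    · rintro ⟨b, z, -, w, -, h⟩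
      exact ⟨z, (eP (γ, z)).2 ⟨w, h⟩⟩

theorem Sig.and {P Q : Γ → Prop} (h : Sig P) (h' : Sig Q) : Sig (fun γ => P γ ∧ Q γ) := by
  obtain ⟨P', hP, eP⟩ := h
  obtain ⟨Q', hQ, eQ⟩ := h'
  have : Sig (fun γ => ∃ z w, P' γ z ∧ Q' γ w) := by
    refine Sig.ex (Sig.ex (Sig.ofD0 (D0.and ?_ ?_)))
    · exact hP.ren (r := fun p : (Γ × M) × M => (p.1.1, p.1.2)) ((TmMap.id.fst.fst).prod Tm.snd.fst)
    · exact hQ.ren (r := fun p : (Γ × M) × M => (p.1.1, p.2)) ((TmMap.id.fst.fst).prod Tm.snd)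
  exact this.congr fun γ => by rw [eP, eQ]; simp

theorem Sig.or {P Q : Γ → Prop} (h : Sig P) (h' : Sig Q) : Sig (fun γ => P γ ∨ Q γ) := by
  obtain ⟨P', hP, eP⟩ := h
  obtain ⟨Q', hQ, eQ⟩ := h'
  have : Sig (fun γ => ∃ z, P' γ z ∨ Q' γ z) := Sig.ex (Sig.ofD0 (D0.or hP hQ))
  exact this.congr fun γ => by rw [eP, eQ, exists_or]

/-- Σ₁ induction. -/
theorem Sig.ind {P : M → Prop} (h : Sig P) (h0 : P 0) (hs : ∀ x, P x → P (x + 1)) (x : M) : P x := by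
  obtain ⟨P', ⟨Q, hQ, eQ⟩, eP⟩ := h
  have key : ∀ x, P x ↔ ∃ z, Q ![x, z] := by
    intro x
    rw [eP]
    refine exists_congr fun z => ?_
    refine (eQ (x, z)).trans ?_
    have : (Env.vec (x, z) : Fin 2 → M) = ![x, z] := by
      have : ∀ i : Fin 2, Fin.snoc (α := fun _ => M) (fun _ : Fin 1 => x) z i = ![x, z] i := by
        intro i
        fin_cases i <;> rfl
      exact funext this
    exact iff_of_eq (congrArg Q this)
  have := IS1.ind Q hQ ((key 0).1 h0) (fun x hx => (key _).1 (hs x ((key x).2 hx)))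
  exact (key x).2 (this x)

theorem le_max_succ (a b : M) : a < max a b + 1 := by rw [lt_succ]; simp

theorem D0.collect {P : M → M → Prop} (h : D0 (fun p : M × M => P p.1 p.2)) (t : M)
    (ht : ∀ z, z < t → ∃ w, P z w) : ∃ b, ∀ z, z < t → ∃ w, w < b ∧ P z w := by
  have : Sig (fun u : M => ∃ b, ∀ z, z < u → z < t → ∃ w, w < b ∧ P z w) := by
    refine Sig.ex (Sig.ofD0 (D0.ball (Tm.base.fst) (D0.imp (D0.lt .snd (.const _)) (D0.bex Tm.snd.fst ?_))))
    exact h.ren (r := fun p : ((M × M) × M) × M => (p.1.2, p.2)) ((TmMap.base Tm.snd.fst).prod .snd)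
  have := this.ind ⟨0, fun z hz => absurd hz (by simp)⟩ (by
    rintro x ⟨b, hb⟩
    by_cases hx : x < t
    · obtain ⟨w, hw⟩ := ht x hx
      refine ⟨max b (w+1), fun z hz hzt => ?_⟩
      rcases (lt_succ.1 hz).lt_or_eq with hz | rfl
      · obtain ⟨w', h1, h2⟩ := hb z hz hzt
        exact ⟨w', lt_max_of_lt_left h1, h2⟩
      · exact ⟨w, lt_max_of_lt_right (lt_succ.2 le_rfl), hw⟩
    · refine ⟨b, fun z hz hzt => hb z ?_ hzt⟩
      rcases (lt_succ.1 hz).lt_or_eq with hz | rfl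
      · exact hz
      · exact absurd hzt hx) t
  obtain ⟨b, hb⟩ := this
  exact ⟨b, fun z hz => hb z hz hz⟩

theorem D0.fixEnv {P : Γ → Prop} (h : D0 P) {r : Δ → Γ} (hr : TmMap r) : D0 (fun γ => P (r γ)) := h.ren hr

theorem TmMap.constMap (γ : Γ) : TmMap (fun _ : Δ => γ) := fun _ => .const _

theorem Sig.ballT {t : Γ → M} {P : Γ → M → Prop} (ht : Tm t) (h : Sig (fun p : Γ × M => P p.1 p.2)) :
    Sig (fun γ => ∀ z, z < t γ → P γ z) := by
  obtain ⟨P', hP, eP⟩ := h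
  have : Sig (fun γ => ∃ b, ∀ z, z < t γ → ∃ w, w < b ∧ P' (γ, z) w) := by
    refine Sig.ex (Sig.ofD0 (D0.ball ht.fst (D0.bex Tm.snd.fst ?_)))
    exact hP.ren (r := fun p : ((Γ × M) × M) × M => ((p.1.1.1, p.1.2), p.2))
      ((((TmMap.id.fst).fst.fst).prod (Tm.snd.fst)).prod .snd)
  refine this.congr fun γ => ⟨fun h => ?_, ?_⟩
  · refine D0.collect (P := fun z w => P' (γ, z) w) ?_ _ (fun z hz => (eP (γ, z)).1 (h z hz))
    exact hP.ren (r := fun p : M × M => ((γ, p.1), p.2)) (((TmMap.constMap γ).prod (Tm.base.fst)).prod .snd)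
  · rintro ⟨b, hb⟩ z hz
    obtain ⟨w, -, hw⟩ := hb z hz
    exact (eP (γ, z)).2 ⟨w, hw⟩

/-! ## Σ₁ functions and Δ₁ predicates -/

class F1 (f : Γ → M) : Prop where
  out : Sig (fun p : Γ × M => p.2 = f p.1)

class Del (P : Γ → Prop) : Prop where
  pos : Sig P
  neg : Sig (fun γ => ¬ P γ)

theorem F1.ofTm {f : Γ → M} (h : Tm f) : F1 f := ⟨Sig.ofD0 (D0.eq .snd h.fst)⟩
theorem Del.ofD0 {P : Γ → Prop} (h : D0 P) : Del P := ⟨Sig.ofD0 h, Sig.ofD0 h.not⟩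
theorem Del.congr {P Q : Γ → Prop} (h : Del P) (e : ∀ γ, Q γ ↔ P γ) : Del Q :=
  ⟨h.pos.congr e, h.neg.congr fun γ => not_congr (e γ)⟩

theorem Sig.app {P : Γ → M → Prop} (h : Sig (fun p : Γ × M => P p.1 p.2)) {f : Γ → M} (hf : F1 f) :
    Sig (fun γ => P γ (f γ)) :=
  (Sig.ex (P := fun γ u => u = f γ ∧ P γ u) (Sig.and hf.out h)).congr fun γ => by simp

theorem F1.ren {f : Δ → M} (h : F1 f) {r : Γ → Δ} (hr : TmMap r) : F1 (fun γ => f (r γ)) :=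
  ⟨h.out.ren (r := fun p : Γ × M => (r p.1, p.2)) (hr.fst.prod .snd)⟩
theorem F1.lift {f : Γ → M} (h : F1 f) : F1 (fun p : Γ × M => f p.1) := h.ren TmMap.id.fst

theorem Sig.comp1 {P : M → Prop} (h : Sig P) {f : Γ → M} (hf : F1 f) : Sig (fun γ => P (f γ)) :=
  Sig.app (P := fun _ u => P u) (h.ren (r := fun p : Γ × M => p.2) (.base .snd)) hf

theorem Sig.comp2 {P : M → M → Prop} (h : Sig (fun p : M × M => P p.1 p.2)) {f g : Γ → M} (hf : F1 f) (hg : F1 g) :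
    Sig (fun γ => P (f γ) (g γ)) := by
  refine Sig.app (P := fun γ u => P (f γ) u) ?_ hg
  refine Sig.app (P := fun p u => P u p.2) ?_ hf.lift
  exact h.ren (r := fun p : (Γ × M) × M => (p.2, p.1.2)) ((TmMap.base .snd).prod Tm.snd.fst)

theorem Sig.comp3 {P : M → M → M → Prop} (h : Sig (fun p : (M × M) × M => P p.1.1 p.1.2 p.2)) {f g k : Γ → M}
    (hf : F1 f) (hg : F1 g) (hk : F1 k) :
    Sig (fun γ => P (f γ) (g γ) (k γ)) := by
  refine Sig.app (P := fun γ u => P (f γ) (g γ) u) ?_ hk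
  refine Sig.app (P := fun p u => P (f p.1) u p.2) ?_ hg.lift
  refine Sig.app (P := fun p u => P u p.2 p.1.2) ?_ hf.lift.lift
  exact h.ren (r := fun p : ((Γ × M) × M) × M => ((p.2, p.1.2), p.1.1.2))
    (((TmMap.base .snd).prod Tm.snd.fst).prod Tm.snd.fst.fst)

theorem F1.comp1 {P : M → M} (h : F1 P) {f : Γ → M} (hf : F1 f) : F1 (fun γ => P (f γ)) :=
  ⟨Sig.comp2 (P := fun u v => v = P u) h.out hf.lift (.ofTm .snd)⟩
theorem F1.comp2 {P : M → M → M} (h : F1 (fun p : M × M => P p.1 p.2)) {f g : Γ → M} (hf : F1 f) (hg : F1 g) :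
    F1 (fun γ => P (f γ) (g γ)) :=
  ⟨Sig.comp3 (P := fun u v w => w = P u v) h.out hf.lift hg.lift (.ofTm .snd)⟩
theorem F1.comp3 {P : M → M → M → M} (h : F1 (fun p : (M × M) × M => P p.1.1 p.1.2 p.2)) {f g k : Γ → M}
    (hf : F1 f) (hg : F1 g) (hk : F1 k) :
    F1 (fun γ => P (f γ) (g γ) (k γ)) := by
  have h1 : Sig (fun p : Γ × M => ∃ u, u = f p.1 ∧ ∃ v, v = g p.1 ∧ ∃ w, w = k p.1 ∧ p.2 = P u v w) := by
    refine Sig.ex (Sig.and (hf.lift.out) (Sig.ex (Sig.and hg.lift.lift.out (Sig.ex (Sig.and hk.lift.lift.lift.out ?_)))))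
    exact h.out.ren (r := fun p : (((Γ × M) × M) × M) × M => (((p.1.1.2, p.1.2), p.2), p.1.1.1.2))
      ((((TmMap.base Tm.snd.fst.fst).prod Tm.snd.fst).prod Tm.snd).prod Tm.snd.fst.fst.fst)
  exact ⟨h1.congr fun p => by simp⟩
theorem Del.comp1 {P : M → Prop} (h : Del P) {f : Γ → M} (hf : F1 f) : Del (fun γ => P (f γ)) :=
  ⟨h.pos.comp1 hf, h.neg.comp1 hf⟩
theorem Del.comp2 {P : M → M → Prop} (h : Del (fun p : M × M => P p.1 p.2)) {f g : Γ → M} (hf : F1 f) (hg : F1 g) :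
    Del (fun γ => P (f γ) (g γ)) :=
  ⟨h.pos.comp2 hf hg, h.neg.comp2 (P := fun u v => ¬ P u v) hf hg⟩
theorem Del.comp3 {P : M → M → M → Prop} (h : Del (fun p : (M × M) × M => P p.1.1 p.1.2 p.2)) {f g k : Γ → M}
    (hf : F1 f) (hg : F1 g) (hk : F1 k) :
    Del (fun γ => P (f γ) (g γ) (k γ)) :=
  ⟨h.pos.comp3 hf hg hk, h.neg.comp3 (P := fun u v w => ¬ P u v w) hf hg hk⟩

/-! ### Instances -/

instance F1.iConst (c : M) : F1 (fun _ : Γ => c) := .ofTm (.const c)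
instance F1.iBase : F1 (fun x : M => x) := .ofTm .base
instance F1.i0 : F1 (fun p : Γ × M => p.2) := .ofTm .snd
instance F1.i1 : F1 (fun p : (Γ × M) × M => p.1.2) := .ofTm Tm.snd.fst
instance F1.i2 : F1 (fun p : ((Γ × M) × M) × M => p.1.1.2) := .ofTm Tm.snd.fst.fst
instance F1.i3 : F1 (fun p : (((Γ × M) × M) × M) × M => p.1.1.1.2) := .ofTm Tm.snd.fst.fst.fst
instance F1.i4 : F1 (fun p : ((((Γ × M) × M) × M) × M) × M => p.1.1.1.1.2) :=
  .ofTm Tm.snd.fst.fst.fst.fst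
instance F1.i5 : F1 (fun p : (((((Γ × M) × M) × M) × M) × M) × M => p.1.1.1.1.1.2) :=
  .ofTm Tm.snd.fst.fst.fst.fst.fst
instance F1.i6 : F1 (fun p : ((((((Γ × M) × M) × M) × M) × M) × M) × M => p.1.1.1.1.1.1.2) :=
  .ofTm Tm.snd.fst.fst.fst.fst.fst.fst
instance F1.j1 : F1 (fun p : M × M => p.1) := .ofTm Tm.base.fst
instance F1.j2 : F1 (fun p : (M × M) × M => p.1.1) := .ofTm Tm.base.fst.fst
instance F1.j3 : F1 (fun p : ((M × M) × M) × M => p.1.1.1) := .ofTm Tm.base.fst.fst.fst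
instance F1.j4 : F1 (fun p : (((M × M) × M) × M) × M => p.1.1.1.1) := .ofTm Tm.base.fst.fst.fst.fst
instance F1.j5 : F1 (fun p : ((((M × M) × M) × M) × M) × M => p.1.1.1.1.1) :=
  .ofTm Tm.base.fst.fst.fst.fst.fst
instance F1.j6 : F1 (fun p : (((((M × M) × M) × M) × M) × M) × M => p.1.1.1.1.1.1) :=
  .ofTm Tm.base.fst.fst.fst.fst.fst.fst
instance F1.j7 : F1 (fun p : ((((((M × M) × M) × M) × M) × M) × M) × M => p.1.1.1.1.1.1.1) :=
  .ofTm Tm.base.fst.fst.fst.fst.fst.fst.fst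

instance F1.iAdd {f g : Γ → M} [hf : F1 f] [hg : F1 g] : F1 (fun γ => f γ + g γ) :=
  .comp2 (P := fun u v => u + v) (.ofTm (Tm.base.fst.add .snd)) hf hg
instance F1.iMul {f g : Γ → M} [hf : F1 f] [hg : F1 g] : F1 (fun γ => f γ * g γ) :=
  .comp2 (P := fun u v => u * v) (.ofTm (Tm.base.fst.mul .snd)) hf hg

instance Del.iLt {f g : Γ → M} [hf : F1 f] [hg : F1 g] : Del (fun γ => f γ < g γ) :=
  .comp2 (P := fun u v => u < v) (.ofD0 (D0.lt Tm.base.fst .snd)) hf hg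
instance Del.iEq {f g : Γ → M} [hf : F1 f] [hg : F1 g] : Del (fun γ => f γ = g γ) :=
  .comp2 (P := fun u v => u = v) (.ofD0 (D0.eq Tm.base.fst .snd)) hf hg
instance Del.iNot {P : Γ → Prop} [h : Del P] : Del (fun γ => ¬ P γ) :=
  ⟨h.neg, h.pos.congr fun γ => by simp⟩
instance Del.iLe {f g : Γ → M} [hf : F1 f] [hg : F1 g] : Del (fun γ => f γ ≤ g γ) :=
  (Del.iNot (P := fun γ => g γ < f γ)).congr fun γ => by simp
instance Del.iAnd {P Q : Γ → Prop} [h : Del P] [h' : Del Q] : Del (fun γ => P γ ∧ Q γ) :=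
  ⟨h.pos.and h'.pos, (h.neg.or h'.neg).congr fun γ => by tauto⟩
instance Del.iOr {P Q : Γ → Prop} [h : Del P] [h' : Del Q] : Del (fun γ => P γ ∨ Q γ) :=
  ⟨h.pos.or h'.pos, (h.neg.and h'.neg).congr fun γ => by tauto⟩
instance Del.iImp {P Q : Γ → Prop} [h : Del P] [h' : Del Q] : Del (fun γ => P γ → Q γ) :=
  ⟨(h.neg.or h'.pos).congr fun γ => by tauto, (h.pos.and h'.neg).congr fun γ => by tauto⟩
instance Del.iIff {P Q : Γ → Prop} [h : Del P] [h' : Del Q] : Del (fun γ => P γ ↔ Q γ) :=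
  (inferInstance : Del (fun γ => (P γ → Q γ) ∧ (Q γ → P γ))).congr fun γ => by tauto
instance Del.iConst (p : Prop) : Del (fun _ : Γ => p) := by
  by_cases h : p
  · exact (Del.ofD0 (D0.fls.not)).congr fun γ => by simp [h]
  · exact (Del.ofD0 D0.fls).congr fun γ => by simp [h]

theorem Sig.ball {t : Γ → M} {P : Γ → M → Prop} (ht : F1 t) (h : Sig (fun p : Γ × M => P p.1 p.2)) :
    Sig (fun γ => ∀ z, z < t γ → P γ z) := by
  refine Sig.app (P := fun γ u => ∀ z, z < u → P γ z) ?_ ht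
  refine Sig.ballT .snd ?_
  exact h.ren (r := fun p : (Γ × M) × M => (p.1.1, p.2)) ((TmMap.id.fst.fst).prod .snd)
theorem Sig.bex {t : Γ → M} {P : Γ → M → Prop} (ht : F1 t) (h : Sig (fun p : Γ × M => P p.1 p.2)) :
    Sig (fun γ => ∃ z, z < t γ ∧ P γ z) := by
  have h1 := ht.lift (M := M)
  have : Del (fun p : Γ × M => p.2 < t p.1) := inferInstance
  exact Sig.ex (Sig.and this.pos h)
instance Del.iBall {t : Γ → M} {P : Γ → M → Prop} [ht : F1 t] [h : Del (fun p : Γ × M => P p.1 p.2)] :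
    Del (fun γ => ∀ z, z < t γ → P γ z) :=
  ⟨Sig.ball ht h.pos, (Sig.bex ht (P := fun γ z => ¬ P γ z) h.neg).congr fun γ => by push Not; rfl⟩
instance Del.iBex {t : Γ → M} {P : Γ → M → Prop} [ht : F1 t] [h : Del (fun p : Γ × M => P p.1 p.2)] :
    Del (fun γ => ∃ z, z < t γ ∧ P γ z) :=
  ⟨Sig.bex ht h.pos, (Sig.ball ht (P := fun γ z => ¬ P γ z) h.neg).congr fun γ => by push Not; rfl⟩
instance (priority := low) Sig.iDel {P : Γ → Prop} [h : Del P] : Sig P := h.pos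
instance Sig.iEx {P : Γ → M → Prop} [h : Sig (fun p : Γ × M => P p.1 p.2)] :
    Sig (fun γ => ∃ z, P γ z) := Sig.ex h
instance Sig.iBall {t : Γ → M} {P : Γ → M → Prop} [ht : F1 t] [h : Sig (fun p : Γ × M => P p.1 p.2)] :
    Sig (fun γ => ∀ z, z < t γ → P γ z) := Sig.ball ht h
instance Sig.iAnd {P Q : Γ → Prop} [h : Sig P] [h' : Sig Q] : Sig (fun γ => P γ ∧ Q γ) := h.and h'
instance Sig.iOr {P Q : Γ → Prop} [h : Sig P] [h' : Sig Q] : Sig (fun γ => P γ ∨ Q γ) := h.or h'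
instance Sig.iImp {P Q : Γ → Prop} [h : Del P] [h' : Sig Q] : Sig (fun γ => P γ → Q γ) :=
  (h.neg.or h').congr fun γ => by tauto

/-- A total function with Σ₁ graph. -/
theorem F1.ofSig {f : Γ → M} (R : Γ → M → Prop) (h : Sig (fun p : Γ × M => R p.1 p.2))
    (e : ∀ γ z, R γ z ↔ z = f γ) : F1 f := ⟨h.congr fun p => (e p.1 p.2).symm⟩

instance F1.iIte {P : Γ → Prop} [∀ γ, Decidable (P γ)] {f g : Γ → M} [h : Del P] [hf : F1 f] [hg : F1 g] :
    F1 (fun γ => if P γ then f γ else g γ) := by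
  have h1 : Sig (fun p : Γ × M => P p.1) := h.pos.ren (TmMap.id.fst)
  have h2 : Sig (fun p : Γ × M => ¬ P p.1) := h.neg.ren (r := fun p : Γ × M => p.1) (TmMap.id.fst)
  refine F1.ofSig (fun γ z => P γ ∧ z = f γ ∨ ¬ P γ ∧ z = g γ) ((h1.and hf.out).or (h2.and hg.out)) ?_
  intro γ z
  split_ifs with h <;> simp [h]

theorem Sig.ind' {P : M → Prop} [h : Sig P] (h0 : P 0) (hs : ∀ x, P x → P (x + 1)) (x : M) : P x :=
  h.ind h0 hs x

theorem Sig.sInd {P : M → Prop} [h : Sig P] (hs : ∀ x, (∀ y, y < x → P y) → P x) (x : M) : P x := by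
  have h2 : Sig (fun p : M × M => P p.2) := h.comp1 inferInstance
  have : ∀ x : M, ∀ y, y < x → P y := by
    refine Sig.ind' (fun y hy => absurd hy (by simp)) fun x hx y hy => ?_
    rcases (lt_succ.1 hy).lt_or_eq with hy | rfl
    · exact hx y hy
    · exact hs _ hx
  exact this (x+1) x (lt_succ.2 le_rfl)

/-- Least number principle. -/
theorem Del.least {P : M → Prop} [h : Del P] (x : M) (hx : P x) : ∃ y, P y ∧ ∀ z, z < y → ¬ P z := by
  by_contra hc
  push Not at hc
  have : ∀ x, ¬ P x := by
    refine Sig.sInd fun x hx hp => ?_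
    obtain ⟨z, hz, hz'⟩ := hc x hp
    exact hx z hz hz'
  exact this x hx

end FRTAbs


namespace FRTAbs

/-! ## Coding of sequences -/

section CodeDefs
variable {M : Type} [Add M] [Mul M] [One M] [LT M]
def PairC (z x y : M) : Prop := z + z = (x + y) * (x + y + 1) + (y + y)
def BetaR (a b i x : M) : Prop :=
  x < (i + 1) * b + 1 ∧ ∃ q, a = q * ((i + 1) * b + 1) + x
def SeqA (s i x : M) : Prop := ∃ a b, PairC s a b ∧ BetaR a b i x
end CodeDefs

variable {M : Type} [IS1 M] {Γ : Type} [Env M Γ]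

instance eAdd (c : M) : F1 (fun x => c + x) := F1.iAdd (f := fun _ => c) (g := fun x => x)
instance eMul (c : M) : F1 (fun x => c * x) := F1.iMul (f := fun _ => c) (g := fun x => x)
instance eLt (c : M) : Del (fun x => c < x) := Del.iLt (f := fun _ => c) (g := fun x => x)
instance eLe (c : M) : Del (fun x => c ≤ x) := Del.iLe (f := fun _ => c) (g := fun x => x)
instance eEq (c : M) : Del (fun x => c = x) := Del.iEq (f := fun _ => c) (g := fun x => x)

theorem succ_le {x y : M} : x + 1 ≤ y ↔ x < y := by
  rw [← lt_succ]; constructor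
  · intro h; exact lt_of_add_lt_add_right h
  · intro h; exact add_lt_add_left h _

theorem pos_iff {x : M} : 0 < x ↔ 1 ≤ x := by
  rw [← succ_le]; simp

theorem zero_or_succ (x : M) : x = 0 ∨ ∃ y, x = y + 1 := by
  rcases eq_or_ne x 0 with h | h
  · exact .inl h
  · right
    have : 1 ≤ x := pos_iff.1 (pos_iff_ne_zero.2 h)
    obtain ⟨c, rfl⟩ := exists_add_of_le this
    exact ⟨c, add_comm _ _⟩

theorem add_self_inj {a b : M} (h : a + a = b + b) : a = b := by
  rcases lt_trichotomy a b with h1 | h1 | h1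
  · grind
  · exact h1
  · grind

theorem pair_inj_aux {z x y x' y' : M} (h : PairC z x y) (h' : PairC z x' y') : x' + y' ≤ x + y := by
  by_contra hc
  push Not at hc
  obtain ⟨c, hc⟩ := exists_add_of_le (succ_le.2 hc)
  unfold PairC at h h'
  rw [hc] at h'
  have e : y + y = (x + y) + (x + y) + ((1 + 1) + ((1 + 1) * (x + y) * c + (1 + 1 + 1) * c + c * c + (y' + y'))) := by
    apply add_left_cancel (a := (x + y) * (x + y + 1))
    rw [← h, h']; ring
  have h0 : (0:M) < (1 + 1) + ((1 + 1) * (x + y) * c + (1 + 1 + 1) * c + c * c + (y' + y')) :=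
    add_pos_of_pos_of_nonneg (add_pos zero_lt_one zero_lt_one) zero_le
  generalize (1 + 1) + ((1 + 1) * (x + y) * c + (1 + 1 + 1) * c + c * c + (y' + y')) = R at e h0
  have h2 : (0:M) ≤ x := zero_le
  grind

theorem pair_inj {z x y x' y' : M} (h : PairC z x y) (h' : PairC z x' y') : x = x' ∧ y = y' := by
  have e : x + y = x' + y' := le_antisymm (pair_inj_aux h' h) (pair_inj_aux h h')
  have : y = y' := by
    apply add_self_inj
    unfold PairC at h h'
    rw [e] at h
    grind
  exact ⟨by grind, this⟩

theorem pair_ex (x y : M) : ∃ z, PairC z x y := by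
  have : ∀ n : M, ∃ w, w + w = n * (n + 1) := by
    refine Sig.ind' ⟨0, by simp⟩ ?_
    rintro n ⟨w, hw⟩
    exact ⟨w + (n + 1), by grind⟩
  obtain ⟨w, hw⟩ := this (x + y)
  exact ⟨w + y, by unfold PairC; grind⟩

theorem le_of_add_self {a b : M} (h : a + a ≤ b + b) : a ≤ b := by
  by_contra hc
  push Not at hc
  grind

theorem pair_le_right {z x y : M} (h : PairC z x y) : y ≤ z := by
  apply le_of_add_self
  rw [h]
  exact le_add_self

theorem pair_le_left {z x y : M} (h : PairC z x y) : x ≤ z := by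
  apply le_of_add_self
  rw [h]
  rcases zero_or_succ x with rfl | ⟨u, rfl⟩
  · simp
  · have : (u + 1 + y) * (u + 1 + y + 1) + (y + y) =
        (u + 1 + (u + 1)) + (u * (u + 1) + y * y + (1 + 1) * y * u + (1 + 1 + 1) * y + (y + y)) := by ring
    rw [this]
    exact le_self_add

theorem pair_mono {z x y z' x' : M} (h : PairC z x y) (h' : PairC z' x' y) (hx : x ≤ x') : z ≤ z' := by
  apply le_of_add_self
  rw [h, h']
  gcongr

theorem rem_aux {m q x q' x' : M} (h : x < m) (e : q * m + x = q' * m + x') : q' ≤ q := by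
  by_contra hc
  push Not at hc
  obtain ⟨c, rfl⟩ := exists_add_of_le (succ_le.2 hc)
  have : x = m + (c * m + x') := by
    apply add_left_cancel (a := q * m)
    rw [e]; ring
  exact absurd h (not_lt.2 (this ▸ le_self_add))

theorem rem_unique {m q x q' x' : M} (h : x < m) (h' : x' < m) (e : q * m + x = q' * m + x') : x = x' := by
  have : q = q' := le_antisymm (rem_aux h' e.symm) (rem_aux h e)
  subst this
  grind

theorem div_ex (m : M) (hm : 0 < m) (a : M) : ∃ q r, r < m ∧ a = q * m + r := by
  revert a
  refine Sig.ind' ⟨0, 0, hm, by simp⟩ ?_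
  rintro a ⟨q, r, hr, rfl⟩
  rcases (succ_le.2 hr).lt_or_eq with h | h
  · exact ⟨q, r + 1, h, by grind⟩
  · exact ⟨q + 1, 0, hm, by grind⟩

theorem seqA_unique {s i x x' : M} (h : SeqA s i x) (h' : SeqA s i x') : x = x' := by
  obtain ⟨a, b, hp, hx, q, hq⟩ := h
  obtain ⟨a', b', hp', hx', q', hq'⟩ := h'
  obtain ⟨rfl, rfl⟩ := pair_inj hp hp'
  exact rem_unique hx hx' (hq.symm.trans hq')

theorem seqA_iff {s i x : M} : SeqA s i x ↔ ∃ a, a < s + 1 ∧ ∃ b, b < s + 1 ∧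
    s + s = (a + b) * (a + b + 1) + (b + b) ∧ x < (i + 1) * b + 1 ∧
    ∃ q, q < a + 1 ∧ a = q * ((i + 1) * b + 1) + x := by
  constructor
  · rintro ⟨a, b, hp, hx, q, hq⟩
    refine ⟨a, lt_succ.2 (pair_le_left hp), b, lt_succ.2 (pair_le_right hp), hp, hx, q, ?_, hq⟩
    rw [lt_succ, hq]
    have : q * 1 ≤ q * ((i + 1) * b + 1) := by gcongr; exact le_add_self
    rw [mul_one] at this
    exact this.trans le_self_add
  · rintro ⟨a, -, b, -, hp, hx, q, -, hq⟩
    exact ⟨a, b, hp, hx, q, hq⟩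

theorem seqA_le {s i x : M} (h : SeqA s i x) : x ≤ s := by
  obtain ⟨a, b, hp, hx, q, hq⟩ := h
  refine le_trans ?_ (pair_le_left hp)
  rw [hq]
  exact le_add_self

instance seqA_del {f g h : Γ → M} [hf : F1 f] [hg : F1 g] [hh : F1 h] :
    Del (fun γ => SeqA (f γ) (g γ) (h γ)) := by
  refine Del.comp3 (P := SeqA) ?_ hf hg hh
  simp only [seqA_iff]
  infer_instance

open Classical in
/-- The `i`-th value of the sequence coded by `s` (and `0` if there is none). -/
noncomputable def val (s i : M) : M := if h : ∃ x, SeqA s i x then h.choose else 0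

theorem val_eq {s i x : M} (h : SeqA s i x) : val s i = x := by
  have h' : ∃ x, SeqA s i x := ⟨x, h⟩
  unfold val
  rw [dif_pos h']
  exact seqA_unique h'.choose_spec h

instance val_F1 {f g : Γ → M} [hf : F1 f] [hg : F1 g] : F1 (fun γ => val (f γ) (g γ)) := by
  refine F1.comp2 (P := val) ?_ hf hg
  refine F1.ofSig (fun p z => SeqA p.1 p.2 z ∨ (z = 0 ∧ ¬ ∃ x, x < p.1 + 1 ∧ SeqA p.1 p.2 x)) inferInstance ?_
  rintro ⟨s, i⟩ z
  simp only
  by_cases h : ∃ x, SeqA s i x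
  · obtain ⟨x, hx⟩ := h
    rw [val_eq hx]
    constructor
    · rintro (h | ⟨-, h⟩)
      · exact seqA_unique h hx
      · exact absurd ⟨x, lt_succ.2 (seqA_le hx), hx⟩ h
    · rintro rfl; exact .inl hx
  · unfold val
    rw [dif_neg h]
    constructor
    · rintro (h' | h')
      · exact absurd ⟨_, h'⟩ h
      · exact h'.1
    · rintro rfl; exact .inr ⟨rfl, fun ⟨x, _, hx⟩ => h ⟨x, hx⟩⟩

instance eVal (s : M) : F1 (fun i => val s i) := val_F1 (f := fun _ => s) (g := fun x => x)
instance eSeq (s i : M) : Del (fun x => SeqA s i x) :=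
  seqA_del (f := fun _ => s) (g := fun _ => i) (h := fun x => x)

theorem pair_surj (z : M) : ∃ x y, PairC z x y := by
  unfold PairC
  revert z
  refine Sig.ind' ⟨0, 0, by simp⟩ ?_
  rintro z ⟨x, y, h⟩
  rcases zero_or_succ x with rfl | ⟨x, rfl⟩
  · exact ⟨y + 1, 0, by grind⟩
  · exact ⟨x, y + 1, by grind⟩

theorem seqA_val (s i : M) : SeqA s i (val s i) := by
  obtain ⟨a, b, h⟩ := pair_surj s
  obtain ⟨q, r, hr, e⟩ := div_ex ((i + 1) * b + 1) (lt_succ.2 zero_le) a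
  have : SeqA s i r := ⟨a, b, h, hr, q, e⟩
  rw [val_eq this]; exact this

theorem seqA_iff_val {s i x : M} : SeqA s i x ↔ val s i = x :=
  ⟨val_eq, fun h => h ▸ seqA_val s i⟩

/-! ### Coprimality -/

def BC (a b : M) : Prop := ∃ s t, s * a = t * b + 1

theorem BC.symm {a b : M} (h : BC a b) (ha : 1 ≤ a) (hb : 1 ≤ b) : BC b a := by
  obtain ⟨s, t, h⟩ := h
  have h1 : t ≤ a * (s + t) := by
    calc t ≤ 1 * (s + t) := by rw [one_mul]; exact le_add_self
      _ ≤ _ := by gcongr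
  have h2 : s ≤ b * (s + t) := by
    calc s ≤ 1 * (s + t) := by rw [one_mul]; exact le_self_add
      _ ≤ _ := by gcongr
  obtain ⟨α, hα⟩ := exists_add_of_le h1
  obtain ⟨β, hβ⟩ := exists_add_of_le h2
  exact ⟨α, β, by grind⟩

theorem BC.mul {a a' b : M} (h : BC a b) (h' : BC a' b) : BC (a * a') b := by
  obtain ⟨s, t, h⟩ := h
  obtain ⟨s', t', h'⟩ := h'
  exact ⟨s * s', t * t' * b + t + t', by grind⟩

theorem bc_moduli_lt {n b i j : M} (hb : ∀ d, d < n → 0 < d → ∃ c, b = d * c) (hij : i < j) (hj : j < n) :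
    BC ((j + 1) * b + 1) ((i + 1) * b + 1) := by
  obtain ⟨d, rfl⟩ := exists_add_of_le hij.le
  have hd : 0 < d := by
    rw [pos_iff_ne_zero]; rintro rfl; simp at hij
  obtain ⟨c, hc⟩ := hb d (lt_of_le_of_lt le_add_self hj) hd
  exact ⟨1 + (i + d + 1) * (i + 1) * c, (i + d + 1) * (i + d + 1) * c, by rw [hc]; ring⟩

theorem bc_moduli {n b i j : M} (hb : ∀ d, d < n → 0 < d → ∃ c, b = d * c) (hij : i ≠ j) (hi : i < n) (hj : j < n) :
    BC ((j + 1) * b + 1) ((i + 1) * b + 1) := by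
  rcases lt_or_gt_of_ne hij with h | h
  · exact bc_moduli_lt hb h hj
  · exact (bc_moduli_lt hb h hi).symm le_add_self le_add_self

theorem ex_common (n m : M) : ∃ b, m ≤ b ∧ ∀ d, d < n → 0 < d → ∃ c, b = d * c := by
  have : ∀ n : M, ∃ b, 0 < b ∧ ∀ d, d < n → 0 < d → ∃ c, b = d * c := by
    refine Sig.ind' ⟨1, zero_lt_one, fun d hd => absurd hd (by simp)⟩ ?_
    rintro n ⟨b, hb0, hb⟩
    rcases eq_or_ne n 0 with rfl | hn
    · exact ⟨b, hb0, fun d hd hd' => absurd (pos_iff.1 hd') (not_le.2 (by simpa using hd))⟩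
    refine ⟨b * n, mul_pos hb0 (pos_iff_ne_zero.2 hn), fun d hd hd0 => ?_⟩
    rcases (lt_succ.1 hd).lt_or_eq with h | rfl
    · obtain ⟨c, rfl⟩ := hb d h hd0
      exact ⟨c * n, by ring⟩
    · exact ⟨b, by ring⟩
  obtain ⟨b, h0, hb⟩ := this n
  refine ⟨b * m, ?_, fun d hd hd0 => ?_⟩
  · calc m = 1 * m := by ring
      _ ≤ b * m := by gcongr; exact pos_iff.1 h0
  · obtain ⟨c, rfl⟩ := hb d hd hd0
    exact ⟨c * m, by ring⟩

theorem crt {n b : M} (hb : ∀ d, d < n → 0 < d → ∃ c, b = d * c) (F : M → M) [hF : F1 F] :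
    ∃ a L, 0 < L ∧ (∀ i, i < n → ∃ l, L = ((i + 1) * b + 1) * l) ∧
      ∀ i, i < n → ∃ q, a = q * ((i + 1) * b + 1) + F i := by
  have hF' : ∀ {Γ : Type} [Env M Γ] {f : Γ → M} [F1 f], F1 (fun γ => F (f γ)) := by
    intro Γ _ f h; exact hF.comp1 h
  have key : ∀ u : M, u ≤ n → ∃ a L, 0 < L ∧ (∀ i, i < u → ∃ l, L = ((i + 1) * b + 1) * l) ∧
      (∀ i, i < u → ∃ q, a = q * ((i + 1) * b + 1) + F i) ∧
      ∀ j, j < n → u ≤ j → ∃ s t, s * L = t * ((j + 1) * b + 1) + 1 := by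
    refine Sig.ind' ?_ ?_
    · intro _
      refine ⟨0, 1, zero_lt_one, fun i hi => absurd hi (by simp), fun i hi => absurd hi (by simp), fun j _ _ => ⟨1, 0, by simp⟩⟩
    · intro u ih hu
      have hun : u < n := succ_le.1 hu
      obtain ⟨a, L, hL, h1, h2, h3⟩ := ih hun.le
      obtain ⟨s, t, hst⟩ := h3 u hun le_rfl
      refine ⟨a + L * s * (F u + a * ((u + 1) * b)), L * ((u + 1) * b + 1), mul_pos hL (lt_succ.2 zero_le), ?_, ?_, ?_⟩
      · intro i hi
        rcases (lt_succ.1 hi).lt_or_eq with h | rfl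
        · obtain ⟨l, hl⟩ := h1 i h
          exact ⟨l * ((u + 1) * b + 1), by rw [hl]; ring⟩
        · exact ⟨L, by ring⟩
      · intro i hi
        rcases (lt_succ.1 hi).lt_or_eq with h | rfl
        · obtain ⟨l, hl⟩ := h1 i h
          obtain ⟨q, hq⟩ := h2 i h
          refine ⟨q + l * s * (F u + a * ((u + 1) * b)), ?_⟩
          rw [hl]
          grind
        · refine ⟨a + t * (F i + a * ((i + 1) * b)), ?_⟩
          rw [mul_comm L s, hst]; ring
      · intro j hj huj
        have hne : j ≠ u := by rintro rfl; exact absurd (succ_le.1 huj) (lt_irrefl _)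
        exact BC.mul (h3 j hj (le_trans le_self_add huj)) (bc_moduli hb hne hj hun)
  obtain ⟨a, L, hL, h1, h2, -⟩ := key n le_rfl
  exact ⟨a, L, hL, h1, h2⟩

/-- Codes of sequences exist, uniformly bounded. -/
theorem exists_seq (n m : M) : ∃ W, ∀ F : M → M, F1 F → (∀ i, i < n → F i < m) →
    ∃ s, s < W ∧ ∀ i, i < n → SeqA s i (F i) := by
  obtain ⟨b, hmb, hb⟩ := ex_common n m
  obtain ⟨-, L, hL, h1, -⟩ := crt hb (fun _ => 0)
  obtain ⟨W, hW⟩ := pair_ex L b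
  refine ⟨W + 1, fun F hF hFm => ?_⟩
  obtain ⟨a, -, -, -, h2⟩ := crt hb F
  obtain ⟨Q, r, hr, rfl⟩ := div_ex L hL a
  obtain ⟨s, hs⟩ := pair_ex r b
  refine ⟨s, lt_succ.2 (pair_mono hs hW hr.le), fun i hi => ?_⟩
  obtain ⟨l, hl⟩ := h1 i hi
  obtain ⟨q, hq⟩ := h2 i hi
  have hlt : F i < (i + 1) * b + 1 := by
    rw [lt_succ]
    calc F i ≤ m := (hFm i hi).le
      _ ≤ b := hmb
      _ = 1 * b := by ring
      _ ≤ (i + 1) * b := by gcongr; exact le_add_self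
  obtain ⟨q', r', hr', e'⟩ := div_ex ((i + 1) * b + 1) (lt_succ.2 zero_le) r
  have : r' = F i := by
    refine rem_unique (q := Q * l + q') (q' := q) hr' hlt ?_
    rw [← hq, e', hl]; ring
  subst this
  exact ⟨r, b, hs, hr', q', e'⟩

theorem F1.bounded (n : M) (F : M → M) [hF : F1 F] : ∃ m, ∀ i, i < n → F i < m := by
  have hF' : ∀ {Γ : Type} [Env M Γ] {f : Γ → M} [F1 f], F1 (fun γ => F (f γ)) := by
    intro Γ _ f h; exact hF.comp1 h
  revert n
  refine Sig.ind' ⟨0, fun d hd => absurd hd (by simp)⟩ ?_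
  rintro n ⟨m, hm⟩
  refine ⟨max m (F n + 1), fun i hi => ?_⟩
  rcases (lt_succ.1 hi).lt_or_eq with h | rfl
  · exact lt_max_of_lt_left (hm i h)
  · exact lt_max_of_lt_right (lt_succ.2 le_rfl)

theorem exists_seq' (n : M) (F : M → M) [hF : F1 F] : ∃ s, ∀ i, i < n → val s i = F i := by
  obtain ⟨m, hm⟩ := F1.bounded n F
  obtain ⟨W, hW⟩ := exists_seq n m
  obtain ⟨s, -, hs⟩ := hW F hF hm
  exact ⟨s, fun i hi => val_eq (hs i hi)⟩

/-! ### Primitive recursion -/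

section PrimRec
variable (c : M → M) (G : M → M → M → M)

def RecSeq (p n s : M) : Prop := val s 0 = c p ∧ ∀ i, i < n → val s (i + 1) = G p i (val s i)


theorem recSeq_ex [hc : F1 c] [hG : F1 (fun p : (M × M) × M => G p.1.1 p.1.2 p.2)] (p n : M) : ∃ s, RecSeq c G p n s := by
  have hG' : ∀ {Γ : Type} [Env M Γ] {f g h : Γ → M} [F1 f] [F1 g] [F1 h],
    F1 (fun γ => G (f γ) (g γ) (h γ)) := by
    intro Γ _ f g h h1 h2 h3; exact hG.comp3 h1 h2 h3
  unfold RecSeq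
  revert n
  refine Sig.ind' ?_ ?_
  · obtain ⟨s, hs⟩ := exists_seq' (1 : M) (fun _ => c p)
    exact ⟨s, hs 0 zero_lt_one, fun d hd => absurd hd (by simp)⟩
  · rintro n ⟨s, h0, hs⟩
    classical
    obtain ⟨s', hs'⟩ := exists_seq' (n + 1 + 1) (fun i => if i < n + 1 then val s i else G p n (val s n))
    have e : ∀ i, i < n + 1 → val s' i = val s i := by
      intro i hi
      rw [hs' i (hi.trans (lt_succ.2 le_rfl)), if_pos hi]
    refine ⟨s', ?_, fun i hi => ?_⟩
    · rw [e 0 (lt_succ.2 zero_le), h0]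
    · rw [e i hi]
      rcases (lt_succ.1 hi).lt_or_eq with h | rfl
      · rw [e (i + 1) (by gcongr), hs i h]
      · rw [hs' (i + 1) (lt_succ.2 le_rfl), if_neg (lt_irrefl _)]

theorem recSeq_unique {p n s s' : M} (h : RecSeq c G p n s) (h' : RecSeq c G p n s') :
    ∀ i, i ≤ n → val s i = val s' i := by
  refine Sig.ind' ?_ ?_
  · intro _; rw [h.1, h'.1]
  · intro i ih hi
    rw [h.2 i (succ_le.1 hi), h'.2 i (succ_le.1 hi), ih (le_trans le_self_add hi)]

noncomputable def recF [hc : F1 c] [hG : F1 (fun p : (M × M) × M => G p.1.1 p.1.2 p.2)] (p n : M) : M := val (recSeq_ex c G p n).choose n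

theorem recF_eq [hc : F1 c] [hG : F1 (fun p : (M × M) × M => G p.1.1 p.1.2 p.2)] {p n s : M} (h : RecSeq c G p n s) : recF c G p n = val s n :=
  recSeq_unique c G (recSeq_ex c G p n).choose_spec h n le_rfl

theorem recF_zero [hc : F1 c] [hG : F1 (fun p : (M × M) × M => G p.1.1 p.1.2 p.2)] (p : M) : recF c G p 0 = c p := (recSeq_ex c G p 0).choose_spec.1
theorem recF_succ [hc : F1 c] [hG : F1 (fun p : (M × M) × M => G p.1.1 p.1.2 p.2)] (p n : M) : recF c G p (n + 1) = G p n (recF c G p n) := by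
  have h := (recSeq_ex c G p (n + 1)).choose_spec
  rw [recF_eq c G h, h.2 n (lt_succ.2 le_rfl), recF_eq c G (s := (recSeq_ex c G p (n + 1)).choose)]
  exact ⟨h.1, fun i hi => h.2 i (hi.trans (lt_succ.2 le_rfl))⟩

theorem recF_F1 [hc : F1 c] [hG : F1 (fun p : (M × M) × M => G p.1.1 p.1.2 p.2)] {f g : Γ → M} [hf : F1 f] [hg : F1 g] : F1 (fun γ => recF c G (f γ) (g γ)) := by
  have hG' : ∀ {Γ : Type} [Env M Γ] {f g h : Γ → M} [F1 f] [F1 g] [F1 h],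
    F1 (fun γ => G (f γ) (g γ) (h γ)) := by
    intro Γ _ f g h h1 h2 h3; exact hG.comp3 h1 h2 h3
  have hc' : ∀ {Γ : Type} [Env M Γ] {f : Γ → M} [F1 f], F1 (fun γ => c (f γ)) := by
    intro Γ _ f h; exact hc.comp1 h
  refine F1.comp2 (P := recF c G) ?_ hf hg
  refine F1.ofSig (fun p z => ∃ s, (val s 0 = c p.1 ∧ ∀ i, i < p.2 → val s (i + 1) = G p.1 i (val s i)) ∧ z = val s p.2) inferInstance ?_
  rintro ⟨p, n⟩ z
  constructor
  · rintro ⟨s, hs, rfl⟩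
    exact (recF_eq c G hs).symm
  · rintro rfl
    exact ⟨_, (recSeq_ex c G p n).choose_spec, rfl⟩

end PrimRec

end FRTAbs


namespace FRTAbs

variable {M : Type} [IS1 M] {Γ : Type} [Env M Γ]

/-! ## Exponentiation and counting -/

/-- `ex a n = a ^ n`. -/
noncomputable def ex (a n : M) : M := recF (fun _ => 1) (fun p _ r => r * p) a n
theorem ex_zero (a : M) : ex a 0 = 1 := recF_zero _ _ a
theorem ex_succ (a n : M) : ex a (n + 1) = ex a n * a := recF_succ _ _ a n
instance ex_F1 {f g : Γ → M} [hf : F1 f] [hg : F1 g] : F1 (fun γ => ex (f γ) (g γ)) :=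
  recF_F1 _ _ (f := f) (g := g)
instance eEx (s : M) : F1 (fun i => ex s i) := ex_F1 (f := fun _ => s) (g := fun x => x)

theorem ex_add (k a b : M) : ex k (a + b) = ex k a * ex k b := by
  revert b
  refine Sig.ind' ?_ ?_
  · rw [ex_zero, add_zero, mul_one]
  · intro b ih
    rw [← add_assoc, ex_succ, ih, ex_succ, mul_assoc]

theorem one_le_ex {k : M} (hk : 1 ≤ k) (n : M) : 1 ≤ ex k n := by
  revert n
  refine Sig.ind' ?_ ?_
  · rw [ex_zero]
  · intro n ih
    rw [ex_succ]
    calc (1:M) = 1 * 1 := by ring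
      _ ≤ _ := by gcongr

theorem ex_mono {k a b : M} (hk : 1 ≤ k) (h : a ≤ b) : ex k a ≤ ex k b := by
  obtain ⟨c, rfl⟩ := exists_add_of_le h
  rw [ex_add]
  calc ex k a = ex k a * 1 := by ring
    _ ≤ _ := by gcongr; exact one_le_ex hk c

theorem ex_one (k : M) : ex k 1 = k := by
  have := ex_succ k 0
  rwa [zero_add, ex_zero, one_mul] at this

open Classical in
/-- The step function for counting. -/
noncomputable def cntG (p i r : M) : M := r + if val p i = 1 then 1 else 0
instance cntG_F1 : F1 (fun p : (M × M) × M => cntG p.1.1 p.1.2 p.2) := by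
  unfold cntG; infer_instance

/-- The number of `z < u` with `val S z = 1`. -/
noncomputable def cnt (S u : M) : M :=
  recF (fun _ => 0) cntG S u
theorem cnt_zero (S : M) : cnt S 0 = 0 := recF_zero _ _ S
theorem cnt_mem {S u : M} (h : val S u = 1) : cnt S (u + 1) = cnt S u + 1 := by
  refine (recF_succ _ _ S u).trans ?_
  simp only [cntG, h, if_true]; rfl
theorem cnt_not {S u : M} (h : ¬ val S u = 1) : cnt S (u + 1) = cnt S u := by
  refine (recF_succ _ _ S u).trans ?_
  simp only [cntG, h, if_false, add_zero]; rfl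
instance cnt_F1 {f g : Γ → M} [hf : F1 f] [hg : F1 g] : F1 (fun γ => cnt (f γ) (g γ)) :=
  recF_F1 _ _ (f := f) (g := g)
instance eCnt (s : M) : F1 (fun i => cnt s i) := cnt_F1 (f := fun _ => s) (g := fun x => x)

theorem lt_self_succ (x : M) : x < x + 1 := lt_succ.2 le_rfl

theorem cnt_le_add {C A B : M} (u : M) (h : ∀ z, z < u → val C z = 1 → val A z = 1 ∨ val B z = 1) :
    cnt C u ≤ cnt A u + cnt B u := by
  revert h
  revert u
  refine Sig.ind' ?_ ?_
  · intro _; simp [cnt_zero]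
  · intro u ih h
    have ih := ih fun z hz => h z (hz.trans (lt_self_succ u))
    have h := h u (lt_self_succ u)
    have h01 : (0:M) < 1 := zero_lt_one
    by_cases hC : val C u = 1 <;> by_cases hA : val A u = 1 <;> by_cases hB : val B u = 1 <;>
      simp only [hC, hA, hB, cnt_mem, cnt_not, not_false_eq_true] <;> grind

theorem cnt_empty {C : M} (u : M) (h : ∀ z, z < u → ¬ val C z = 1) : cnt C u = 0 := by
  revert h
  revert u
  refine Sig.ind' ?_ ?_
  · intro _; simp [cnt_zero]
  · intro u ih h
    rw [cnt_not (h u (lt_self_succ u))]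
    exact ih fun z hz => h z (hz.trans (lt_self_succ u))

theorem cnt_nonempty {C u : M} (h : 1 ≤ cnt C u) : ∃ z, z < u ∧ val C z = 1 := by
  by_contra hc
  push Not at hc
  rw [cnt_empty u hc] at h
  exact absurd h (not_le.2 zero_lt_one)

theorem cnt_single {C b : M} (u : M) (h : ∀ z, z < u → val C z = 1 → z = b) : cnt C u ≤ 1 := by
  revert h
  revert u
  refine Sig.ind' ?_ ?_
  · intro _; simp [cnt_zero]
  · intro u ih h
    by_cases hC : val C u = 1
    · rw [cnt_mem hC, cnt_empty u, zero_add]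
      intro z hz hz1
      have h1 := h z (hz.trans (lt_self_succ u)) hz1
      have h2 := h u (lt_self_succ u) hC
      rw [h1, h2] at hz
      exact lt_irrefl _ hz
    · rw [cnt_not hC]
      exact ih fun z hz => h z (hz.trans (lt_self_succ u))

theorem cnt_le (C u : M) : cnt C u ≤ u := by
  revert u
  refine Sig.ind' ?_ ?_
  · simp [cnt_zero]
  · intro u ih
    by_cases hC : val C u = 1
    · rw [cnt_mem hC]; gcongr
    · rw [cnt_not hC]; exact ih.trans le_self_add

theorem cnt_mono_right (C u : M) (d : M) : cnt C u ≤ cnt C (u + d) := by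
  revert d
  refine Sig.ind' ?_ ?_
  · simp
  · intro d ih
    rw [← add_assoc]
    by_cases hC : val C (u + d) = 1
    · rw [cnt_mem hC]; exact ih.trans le_self_add
    · rw [cnt_not hC]; exact ih

theorem cnt_mono_right' {C u v : M} (h : u ≤ v) : cnt C u ≤ cnt C v := by
  obtain ⟨d, rfl⟩ := exists_add_of_le h
  exact cnt_mono_right C u d

theorem cnt_sub {C A : M} (u : M) (h : ∀ z, z < u → val C z = 1 → val A z = 1) :
    cnt C u ≤ cnt A u := by
  revert h
  revert u
  refine Sig.ind' ?_ ?_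
  · intro _; simp [cnt_zero]
  · intro u ih h
    have ih := ih fun z hz => h z (hz.trans (lt_self_succ u))
    have h := h u (lt_self_succ u)
    have h01 : (0:M) < 1 := zero_lt_one
    by_cases hC : val C u = 1 <;> by_cases hA : val A u = 1 <;>
      simp only [hC, hA, cnt_mem, cnt_not, not_false_eq_true] <;> grind

/-- A set containing an increasing sequence of length `n` has at least `n` elements. -/
theorem cnt_range {S a n y : M} (h1 : ∀ i, i < n → val a i < y ∧ val S (val a i) = 1)
    (h2 : ∀ i, i < n → ∀ j, j < i → val a j < val a i) : n ≤ cnt S y := by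
  have key : ∀ i, i < n → i + 1 ≤ cnt S (val a i + 1) := by
    refine Sig.ind' ?_ ?_
    · intro h
      rw [cnt_mem (h1 _ h).2, zero_add]
      exact le_add_self
    · intro i ih hi
      have hi' := (lt_self_succ i).trans hi
      rw [cnt_mem (h1 _ hi).2]
      have := (ih hi').trans (cnt_mono_right' (succ_le.2 (h2 _ hi _ (lt_self_succ i))))
      gcongr
  rcases zero_or_succ n with rfl | ⟨i, rfl⟩
  · exact zero_le
  · exact (key i (lt_self_succ i)).trans (cnt_mono_right' (succ_le.2 (h1 i (lt_self_succ i)).1))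

/-- Bounded comprehension. -/
def Compr (y Y : M) : Prop := ∀ P : M → Prop, Del P → ∃ S, S < Y ∧ ∀ z, z < y → (val S z = 1 ↔ P z)

theorem exists_compr (y : M) : ∃ Y, Compr y Y := by
  classical
  obtain ⟨Y, hY⟩ := exists_seq y (1 + 1)
  refine ⟨Y, fun P hP => ?_⟩
  obtain ⟨S, hS, h⟩ := hY (fun z => if P z then 1 else 0) inferInstance (by
    intro i _
    split_ifs
    · exact lt_self_succ 1
    · exact add_pos zero_lt_one zero_lt_one)
  refine ⟨S, hS, fun z hz => ?_⟩
  rw [val_eq (h z hz)]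
  split_ifs with h <;> simp [h]

theorem exists_mu {R : Γ → M → Prop} (hR : Del (fun p : Γ × M => R p.1 p.2)) (W : M) :
    ∃ μ : Γ → M, F1 μ ∧ (∀ γ, (∃ q, q < W ∧ R γ q) → μ γ < W ∧ R γ (μ γ)) ∧
      ∀ γ γ', (∀ q, R γ q ↔ R γ' q) → μ γ = μ γ' := by
  have h : ∀ γ, ∃ q, (R γ q ∨ q = W) ∧ ∀ q', q' < q → ¬ (R γ q' ∨ q' = W) := by
    intro γ
    have : Del (fun q => R γ q) :=
      ⟨hR.pos.ren (r := fun q : M => (γ, q)) ((TmMap.constMap γ).prod .base),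
       hR.neg.ren (r := fun q : M => (γ, q)) ((TmMap.constMap γ).prod .base)⟩
    exact Del.least (P := fun q => R γ q ∨ q = W) W (Or.inr rfl)
  have huniq : ∀ γ q q', ((R γ q ∨ q = W) ∧ ∀ q', q' < q → ¬ (R γ q' ∨ q' = W)) →
      ((R γ q' ∨ q' = W) ∧ ∀ q'', q'' < q' → ¬ (R γ q'' ∨ q'' = W)) → q = q' := by
    intro γ q q' h1 h2
    rcases lt_trichotomy q q' with h | h | h
    · exact absurd h1.1 (h2.2 _ h)
    · exact h
    · exact absurd h2.1 (h1.2 _ h)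
  choose μ hμ using h
  refine ⟨μ, ?_, ?_, ?_⟩
  · refine F1.ofSig (fun γ q => (R γ q ∨ q = W) ∧ ∀ q', q' < q → ¬ (R γ q' ∨ q' = W)) ?_ ?_
    · have h2 : Del (fun p : (Γ × M) × M => R p.1.1 p.2) :=
        ⟨hR.pos.ren (r := fun p : (Γ × M) × M => (p.1.1, p.2)) ((TmMap.id.fst.fst).prod .snd),
         hR.neg.ren (r := fun p : (Γ × M) × M => (p.1.1, p.2)) ((TmMap.id.fst.fst).prod .snd)⟩
      infer_instance
    · intro γ q
      exact ⟨fun h => huniq γ _ _ h (hμ γ), fun h => h ▸ hμ γ⟩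
  · rintro γ ⟨q, hq, hR⟩
    have : μ γ ≤ q := by
      by_contra hc
      exact (hμ γ).2 q (not_le.1 hc) (.inl hR)
    have hlt := lt_of_le_of_lt this hq
    exact ⟨hlt, (hμ γ).1.resolve_right hlt.ne⟩
  · intro γ γ' h
    refine huniq γ _ _ (hμ γ) ?_
    have := hμ γ'
    simpa only [h] using this

end FRTAbs


namespace FRTAbs

variable {M : Type} [IS1 M] {Γ : Type} [Env M Γ]

/-! ## Pigeonhole and end-homogeneous sequences -/

theorem pigeonhole {y Y : M} (hY : Compr y Y) {k : M} (hk : 1 ≤ k) (h : M → M) [hh : F1 h]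
    (hlt : ∀ z, z < y → h z < k) {m S : M} (hS : m * k ≤ cnt S y) :
    ∃ c S', S' < Y ∧ (∀ z, z < y → (val S' z = 1 ↔ val S z = 1 ∧ h z = c)) ∧ m ≤ cnt S' y := by
  by_contra hc
  push Not at hc
  have hh' : ∀ {Γ : Type} [Env M Γ] {f : Γ → M} [F1 f], F1 (fun γ => h (f γ)) := by
    intro Γ _ f h; exact hh.comp1 h
  have key : ∀ c : M, ∃ T, (∀ z, z < y → (val T z = 1 ↔ val S z = 1 ∧ h z < c)) ∧
      cnt T y + c ≤ c * m := by
    refine Sig.ind' ?_ ?_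
    · obtain ⟨T, -, hT⟩ := hY (fun z => False) inferInstance
      refine ⟨T, fun z hz => ?_, ?_⟩
      · simp [hT z hz]
      · rw [cnt_empty y fun z hz => by simp [hT z hz] ]; simp
    · rintro c ⟨T, hT, hTc⟩
      obtain ⟨A, hA, hA'⟩ := hY (fun z => val S z = 1 ∧ h z = c) inferInstance
      obtain ⟨T', -, hT'⟩ := hY (fun z => val S z = 1 ∧ h z < c + 1) inferInstance
      refine ⟨T', hT', ?_⟩
      have h1 : cnt T' y ≤ cnt T y + cnt A y := by
        refine cnt_le_add y fun z hz hz1 => ?_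
        rw [hT z hz, hA' z hz]
        have := (hT' z hz).1 hz1
        rcases (lt_succ.1 this.2).lt_or_eq with h | h
        · exact .inl ⟨this.1, h⟩
        · exact .inr ⟨this.1, h⟩
      have h2 := succ_le.2 (hc c A hA hA')
      calc cnt T' y + (c + 1) ≤ cnt T y + cnt A y + (c + 1) := by gcongr
        _ = (cnt T y + c) + (cnt A y + 1) := by ring
        _ ≤ c * m + m := by gcongr
        _ = (c + 1) * m := by ring
  obtain ⟨T, hT, hT2⟩ := key k
  have h1 : cnt S y ≤ cnt T y := cnt_sub y fun z hz hz1 => (hT z hz).2 ⟨hz1, hlt z hz⟩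
  have : cnt T y + k ≤ cnt T y + 0 := by
    rw [add_zero]
    exact hT2.trans ((mul_comm k m).le.trans (hS.trans h1))
  have := le_of_add_le_add_left this
  exact absurd (hk.trans this) (not_le.2 zero_lt_one)

section Refine

theorem refine_set {y Y k : M} (hY : Compr y Y) (hk : 1 ≤ k) (g : M → M → M)
  [hg : F1 (fun p : M × M => g p.1 p.2)]
  (hlt : ∀ D z, z < y → g D z < k)
  (hext : ∀ D D', (∀ z, z < y → (val D z = 1 ↔ val D' z = 1)) → ∀ z, z < y → g D z = g D' z)
    (a : M) (i : M) : ∀ m, m < y + 1 → ∀ B, B < Y → ∀ S, S < Y →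
    m * ex k (ex (1 + 1) i) ≤ cnt S y →
    ∃ S', S' < Y ∧ (∀ z, z < y → val S' z = 1 → val S z = 1) ∧ m ≤ cnt S' y ∧
      ∀ D, D < Y → (∀ z, z < y → val B z = 1 → val D z = 1) →
        (∀ z, z < y → val D z = 1 → val B z = 1 ∨ ∃ l, l < i ∧ val a l = z) →
        ∀ z, z < y → ∀ z', z' < y → val S' z = 1 → val S' z' = 1 → g D z = g D z' := by
  have hg' : ∀ {Γ : Type} [Env M Γ] {f h : Γ → M} [F1 f] [F1 h], F1 (fun γ => g (f γ) (h γ)) := by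
    intro Γ _ f h h1 h2; exact hg.comp2 h1 h2
  have hg'' : ∀ D, F1 (g D) := fun D => hg' (f := fun _ => D) (h := fun x => x)
  revert i
  refine Sig.ind' ?_ ?_
  · intro m _ B _ S _ hS
    rw [ex_zero, ex_one] at hS
    obtain ⟨c, S', hS', h1, h2⟩ := pigeonhole hY hk (g B) (hlt B) hS
    refine ⟨S', hS', fun z hz h => ((h1 z hz).1 h).1, h2, fun D _ hBD hDB z hz z' hz' hz1 hz1' => ?_⟩
    have e := hext D B (fun z hz => ⟨fun h => ?_, hBD z hz⟩)
    · rw [e z hz, e z' hz', ((h1 z hz).1 hz1).2, ((h1 z' hz').1 hz1').2]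
    · rcases hDB z hz h with h | ⟨l, hl, -⟩
      · exact h
      · exact absurd hl (by simp)
  · intro i ih m hm B hB S hSY hS
    have e2 : ex k (ex (1 + 1) (i + 1)) = ex k (ex (1 + 1) i) * ex k (ex (1 + 1) i) := by
      rw [ex_succ, mul_add, mul_one, ex_add]
    rw [e2, ← mul_assoc] at hS
    have hE : 1 ≤ ex k (ex (1 + 1) i) := one_le_ex hk _
    have hm' : m * ex k (ex (1 + 1) i) < y + 1 := by
      rw [lt_succ]
      refine le_trans ?_ (hS.trans (cnt_le _ _))
      calc m * ex k (ex (1 + 1) i) = m * ex k (ex (1 + 1) i) * 1 := by ring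
        _ ≤ _ := by gcongr
    obtain ⟨S1, hS1, hsub1, hc1, hh1⟩ := ih _ hm' B hB S hSY hS
    obtain ⟨B', hB', hBB'⟩ := hY (fun z => val B z = 1 ∨ z = val a i) inferInstance
    obtain ⟨S2, hS2, hsub2, hc2, hh2⟩ := ih m hm B' hB' S1 hS1 hc1
    refine ⟨S2, hS2, fun z hz h => hsub1 z hz (hsub2 z hz h), hc2, ?_⟩
    intro D hD hBD hDB z hz z' hz' hz1 hz1'
    by_cases hai : val D (val a i) = 1
    · refine hh2 D hD (fun u hu hu1 => ?_) (fun u hu hu1 => ?_) z hz z' hz' hz1 hz1'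
      · rcases (hBB' u hu).1 hu1 with h | rfl
        · exact hBD u hu h
        · exact hai
      · rw [hBB' u hu]
        rcases hDB u hu hu1 with h | ⟨l, hl, rfl⟩
        · exact .inl (.inl h)
        · rcases (lt_succ.1 hl).lt_or_eq with h | rfl
          · exact .inr ⟨l, h, rfl⟩
          · exact .inl (.inr rfl)
    · refine hh1 D hD hBD (fun u hu hu1 => ?_) z hz z' hz' (hsub2 z hz hz1) (hsub2 z' hz' hz1')
      rcases hDB u hu hu1 with h | ⟨l, hl, rfl⟩
      · exact .inl h
      · rcases (lt_succ.1 hl).lt_or_eq with h | rfl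
        · exact .inr ⟨l, h, rfl⟩
        · exact absurd hu1 hai

set_option synthInstance.maxHeartbeats 2000000 in
set_option synthInstance.maxSize 100000 in
set_option maxHeartbeats 4000000 in
theorem greedy {y Y k : M} (hY : Compr y Y) (hk : 1 ≤ k) (g : M → M → M)
  [hg : F1 (fun p : M × M => g p.1 p.2)]
  (hlt : ∀ D z, z < y → g D z < k)
  (hext : ∀ D D', (∀ z, z < y → (val D z = 1 ↔ val D' z = 1)) → ∀ z, z < y → g D z = g D' z)
    (n S0 : M) (hS0Y : S0 < Y) (hS0 : ex (ex k (ex (1 + 1) n) + 1) n * ex k (ex (1 + 1) n) ≤ cnt S0 y) :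
    ∃ a, (∀ l, l < n → val a l < y ∧ val S0 (val a l) = 1) ∧
      (∀ l, l < n → ∀ l', l' < l → val a l' < val a l) ∧
      ∀ D, D < Y → (∀ z, z < y → val D z = 1 → ∃ l, l < n ∧ val a l = z) →
        ∀ z, z < y → ∀ z', z' < y → (∃ l, l < n ∧ val a l = z) → (∃ l, l < n ∧ val a l = z') →
        (∀ u, u < y → val D u = 1 → u < z) → (∀ u, u < y → val D u = 1 → u < z') →
        g D z = g D z' := by
  have hg' : ∀ {Γ : Type} [Env M Γ] {f h : Γ → M} [F1 f] [F1 h], F1 (fun γ => g (f γ) (h γ)) := by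
    intro Γ _ f h h1 h2; exact hg.comp2 h1 h2
  have hg'' : ∀ D, F1 (g D) := fun D => hg' (f := fun _ => D) (h := fun x => x)
  generalize hK : ex k (ex (1 + 1) n) = E at *
  have hE1 : 1 ≤ E := hK ▸ one_le_ex hk _
  have hK1 : 1 ≤ E + 1 := le_add_self
  have key : ∀ i : M, i ≤ n → ∃ m a S, i + m = n ∧ S < Y ∧
      (∀ l, l < i → val a l < y ∧ val S0 (val a l) = 1 ∧ ∀ z, z < y → val S z = 1 → val a l < z) ∧
      (∀ l, l < i → ∀ l', l' < l → val a l' < val a l) ∧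
      (∀ z, z < y → val S z = 1 → val S0 z = 1) ∧
      ex (E + 1) m ≤ cnt S y ∧
      ∀ D, D < Y → (∀ z, z < y → val D z = 1 → ∃ l, l < i ∧ val a l = z) →
        ∀ z, z < y → ∀ z', z' < y → (val S z = 1 ∨ ∃ l, l < i ∧ val a l = z) →
        (val S z' = 1 ∨ ∃ l, l < i ∧ val a l = z') →
        (∀ u, u < y → val D u = 1 → u < z) → (∀ u, u < y → val D u = 1 → u < z') →
        g D z = g D z' := by
    refine Sig.ind' ?_ ?_
    · intro _
      obtain ⟨B, hB, hB'⟩ := hY (fun z => False) inferInstance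
      have hEk : ex k (ex (1 + 1) 0) ≤ E := by
        rw [← hK]
        exact ex_mono hk (ex_mono le_add_self zero_le)
      have hle : ex (E + 1) n * ex k (ex (1 + 1) 0) ≤ cnt S0 y := le_trans (by gcongr) hS0
      have hm : ex (E + 1) n < y + 1 := by
        rw [lt_succ]
        refine le_trans ?_ (hS0.trans (cnt_le _ _))
        calc ex (E + 1) n = ex (E + 1) n * 1 := by ring
          _ ≤ _ := by gcongr
      obtain ⟨S, hS, hsub, hc, hh⟩ := refine_set hY hk g hlt hext 0 0 _ hm B hB S0 hS0Y hle
      refine ⟨n, 0, S, zero_add n, hS, fun l hl => absurd hl (by simp), fun l hl => absurd hl (by simp),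
        hsub, hc, fun D hD hDa z hz z' hz' hz1 hz1' _ _ => ?_⟩
      have hn : ∀ {p : M → Prop}, ¬ ∃ l, l < 0 ∧ p l := by
        rintro p ⟨l, hl, -⟩
        exact absurd hl (by simp)
      refine hh D hD (fun u hu hu1 => absurd hu1 (by simp [hB' u hu])) (fun u hu hu1 => .inr (hDa u hu hu1))
        z hz z' hz' (hz1.resolve_right hn) (hz1'.resolve_right hn)
    · intro i ih hi
      have hin : i < n := succ_le.1 hi
      obtain ⟨m, a, S, him, hSY, h1, h2, h3, h4, h5⟩ := ih hin.le
      obtain ⟨m, rfl⟩ : ∃ m', m = m' + 1 := by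
        rcases zero_or_succ m with rfl | h
        · rw [add_zero] at him; exact absurd hin (by simp [him])
        · exact h
      have hne : ∃ z, z < y ∧ val S z = 1 := cnt_nonempty ((one_le_ex hK1 _).trans h4)
      obtain ⟨z0, hz0⟩ := hne
      obtain ⟨b, ⟨hby, hbS⟩, hbmin⟩ := Del.least (P := fun z => z < y ∧ val S z = 1) z0 hz0
      classical
      obtain ⟨a', ha'⟩ := exists_seq' (i + 1) (fun l => if l < i then val a l else b)
      have ea : ∀ l, l < i → val a' l = val a l := fun l hl => by
        rw [ha' l (hl.trans (lt_self_succ i)), if_pos hl]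
      have eb : val a' i = b := by
        rw [ha' i (lt_self_succ i), if_neg (lt_irrefl _)]
      obtain ⟨S1, hS1Y, hS1⟩ := hY (fun z => val S z = 1 ∧ b < z) inferInstance
      obtain ⟨B, hBY, hB⟩ := hY (fun z => z = b) inferInstance
      have hcS : cnt S y ≤ cnt S1 y + 1 := by
        have : cnt S y ≤ cnt S1 y + cnt B y := by
          refine cnt_le_add y fun z hz hz1 => ?_
          rw [hS1 z hz, hB z hz]
          have : b ≤ z := not_lt.1 fun h => hbmin z h ⟨hz, hz1⟩
          rcases this.lt_or_eq with h | h
          · exact .inl ⟨hz1, h⟩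
          · exact .inr h.symm
        refine this.trans ?_
        gcongr
        exact cnt_single (b := b) y fun z hz h => (hB z hz).1 h
      have hiE : ex k (ex (1 + 1) i) ≤ E := by
        rw [← hK]
        exact ex_mono hk (ex_mono le_add_self hin.le)
      have hc1 : ex (E + 1) m * E ≤ cnt S1 y := by
        have h6 : ex (E + 1) m * E + 1 ≤ cnt S1 y + 1 := by
          refine le_trans ?_ (h4.trans hcS)
          rw [ex_succ, mul_add, mul_one]
          gcongr
          exact one_le_ex hK1 m
        exact le_of_add_le_add_right h6
      have hc1' : ex (E + 1) m * ex k (ex (1 + 1) i) ≤ cnt S1 y := le_trans (by gcongr) hc1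
      have hm : ex (E + 1) m < y + 1 := by
        rw [lt_succ]
        refine le_trans ?_ (hc1.trans (cnt_le _ _))
        calc ex (E + 1) m = ex (E + 1) m * 1 := by ring
          _ ≤ _ := by gcongr
      obtain ⟨S2, hS2Y, hsub, hc2, hh⟩ := refine_set hY hk g hlt hext a' i _ hm B hBY S1 hS1Y hc1'
      have hsubS : ∀ z, z < y → val S2 z = 1 → val S z = 1 ∧ b < z :=
        fun z hz h => (hS1 z hz).1 (hsub z hz h)
      refine ⟨m, a', S2, by rw [← him]; ring, hS2Y, ?_, ?_, fun z hz h => h3 z hz (hsubS z hz h).1, hc2, ?_⟩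
      · intro l hl
        rcases (lt_succ.1 hl).lt_or_eq with hl | rfl
        · rw [ea l hl]
          obtain ⟨p1, p2, p3⟩ := h1 l hl
          exact ⟨p1, p2, fun z hz h => p3 z hz (hsubS z hz h).1⟩
        · rw [eb]
          exact ⟨hby, h3 b hby hbS, fun z hz h => (hsubS z hz h).2⟩
      · intro l hl l' hl'
        rcases (lt_succ.1 hl).lt_or_eq with hl | rfl
        · rw [ea l hl, ea l' (hl'.trans hl)]
          exact h2 l hl l' hl'
        · rw [eb, ea l' hl']
          exact (h1 l' hl').2.2 b hby hbS
      · intro D hD hDa z hz z' hz' hz1 hz1' hDz hDz'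
        by_cases hbD : val D b = 1
        · have aux : ∀ z, z < y → (val S2 z = 1 ∨ ∃ l, l < i + 1 ∧ val a' l = z) →
              (∀ u, u < y → val D u = 1 → u < z) → val S2 z = 1 := by
            rintro z hz (h | ⟨l, hl, rfl⟩) hDz
            · exact h
            · have hbl := hDz b hby hbD
              rcases (lt_succ.1 hl).lt_or_eq with hl | rfl
              · rw [ea l hl] at hbl
                exact absurd (hbl.trans ((h1 l hl).2.2 b hby hbS)) (lt_irrefl _)
              · rw [eb] at hbl
                exact absurd hbl (lt_irrefl _)
          refine hh D hD (fun u hu hu1 => ?_) (fun u hu hu1 => ?_) z hz z' hz' (aux z hz hz1 hDz)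
            (aux z' hz' hz1' hDz')
          · rw [(hB u hu).1 hu1]; exact hbD
          · obtain ⟨l, hl, rfl⟩ := hDa u hu hu1
            rcases (lt_succ.1 hl).lt_or_eq with hl | rfl
            · exact .inr ⟨l, hl, rfl⟩
            · rw [hB _ hu]; exact .inl eb
        · have aux : ∀ z, z < y → (val S2 z = 1 ∨ ∃ l, l < i + 1 ∧ val a' l = z) →
              (val S z = 1 ∨ ∃ l, l < i ∧ val a l = z) := by
            rintro z hz (h | ⟨l, hl, rfl⟩)
            · exact .inl (hsubS z hz h).1
            · rcases (lt_succ.1 hl).lt_or_eq with hl | rfl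
              · exact .inr ⟨l, hl, (ea l hl).symm⟩
              · rw [eb]; exact .inl hbS
          refine h5 D hD (fun u hu hu1 => ?_) z hz z' hz' (aux z hz hz1) (aux z' hz' hz1') hDz hDz'
          obtain ⟨l, hl, rfl⟩ := hDa u hu hu1
          rcases (lt_succ.1 hl).lt_or_eq with hl | rfl
          · exact ⟨l, hl, (ea l hl).symm⟩
          · rw [eb] at hu1; exact absurd hu1 hbD
  obtain ⟨m, a, S, -, -, h1, h2, -, -, h3⟩ := key n le_rfl
  exact ⟨a, fun l hl => ⟨(h1 l hl).1, (h1 l hl).2.1⟩, h2,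
    fun D hD hDa z hz z' hz' hz1 hz1' => h3 D hD hDa z hz z' hz' (.inr hz1) (.inr hz1')⟩

end Refine
end FRTAbs


namespace FRTAbs

variable {M : Type} [IS1 M] {Γ : Type} [Env M Γ]

/-! ## The main argument -/

/-- `q` codes an increasing sequence of length `e` with values below `y`. -/
def Inc (e y q : M) : Prop := (∀ i, i < e → val q i < y) ∧ ∀ i, i < e → ∀ j, j < i → val q j < val q i

/-- The first `e` values of `q` are among the first `n` values of `h`. -/
def InR (e n h q : M) : Prop := ∀ i, i < e → ∃ l, l < n ∧ val h l = val q i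

instance inc_del {e y f : Γ → M} [he : F1 e] [hy : F1 y] [hf : F1 f] :
    Del (fun γ => Inc (e γ) (y γ) (f γ)) := by
  refine Del.comp3 (P := Inc) ?_ he hy hf
  unfold Inc
  infer_instance
instance inc_del' (e y : M) : Del (fun q => Inc e y q) := inc_del (e := fun _ => e) (y := fun _ => y) (f := fun x => x)

instance inR_del {e : M} {n h q : Γ → M} [hn : F1 n] [hh : F1 h] [hq : F1 q] :
    Del (fun γ => InR e (n γ) (h γ) (q γ)) := by
  refine Del.comp3 (P := InR e) ?_ hn hh hq
  unfold InR
  infer_instance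
instance inR_del' (e n h : M) : Del (fun q => InR e n h q) :=
  inR_del (n := fun _ => n) (h := fun _ => h) (q := fun x => x)

/-- Uniqueness of increasing enumerations. -/
theorem enum_unique_aux {q q' r i : M} (h' : ∀ i, i < r → ∀ j, j < i → val q' j < val q' i)
    (hq : ∀ i, i < r → ∀ j, j < i → val q j < val q i)
    (hsub : ∀ i, i < r → ∃ j, j < r ∧ val q' j = val q i)
    (hi : i < r) (ih : ∀ j, j < i → val q j = val q' j) : val q' i ≤ val q i := by
  obtain ⟨j, hj, e⟩ := hsub i hi
  rw [← e]
  rcases lt_trichotomy j i with h | h | h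
  · rw [← ih j h] at e
    exact absurd e (hq i hi j h).ne
  · rw [h]
  · exact (h' j hj i h).le

theorem enum_unique {q q' r : M} (h : ∀ i, i < r → ∀ j, j < i → val q j < val q i)
    (h' : ∀ i, i < r → ∀ j, j < i → val q' j < val q' i)
    (hsub : ∀ i, i < r → ∃ j, j < r ∧ val q' j = val q i)
    (hsub' : ∀ i, i < r → ∃ j, j < r ∧ val q j = val q' i) : ∀ i, i < r → val q i = val q' i := by
  refine Sig.sInd fun i ih hi => ?_
  have ih' := fun j hj => ih j hj (hj.trans hi)
  exact le_antisymm (enum_unique_aux h h' hsub' hi fun j hj => (ih' j hj).symm)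
    (enum_unique_aux h' h hsub hi ih')

section Step

theorem main_step {e k y Y W : M} (hY : Compr y Y) (hk : 1 ≤ k) (f : M → M) [hf : F1 f]
  (hlt : ∀ q, Inc e y q → f q < k)
    {r n N h : M} (hr : r < e)
    (hN : N = ex (ex k (ex (1 + 1) n) + 1) n * ex k (ex (1 + 1) n))
    (h1 : ∀ l, l < N → val h l < y)
    (h2 : ∀ l, l < N → ∀ l', l' < l → val h l' < val h l)
    (h3 : ∀ q, q < W → ∀ q', q' < W → Inc e y q → Inc e y q' → InR e N h q → InR e N h q' →
      (∀ i, i < r + 1 → val q i = val q' i) → f q = f q') :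
    ∃ a, (∀ l, l < n → val a l < y) ∧ (∀ l, l < n → ∀ l', l' < l → val a l' < val a l) ∧
      ∀ q, q < W → ∀ q', q' < W → Inc e y q → Inc e y q' → InR e n a q → InR e n a q' →
      (∀ i, i < r → val q i = val q' i) → f q = f q' := by
  have hf' : ∀ {Γ : Type} [Env M Γ] {h : Γ → M} [F1 h], F1 (fun γ => f (h γ)) := by
    intro Γ _ f h; exact hf.comp1 h
  let R : M × M → M → Prop := fun p q => Inc e y q ∧ InR e N h q ∧
    (∀ u, u < y → (val p.1 u = 1 ↔ ∃ i, i < r ∧ val q i = u)) ∧ val q r = p.2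
  have hR : Del (fun p : (M × M) × M => R p.1 p.2) := by
    simp only [R]; infer_instance
  obtain ⟨μ, hμ, hμ1, hμ2⟩ := exists_mu hR W
  have hR2 : Del (fun p : M × M => ∃ q, q < W ∧ R p q) := by
    simp only [R]; infer_instance
  classical
  let g : M → M → M := fun D z => if ∃ q, q < W ∧ R (D, z) q then f (μ (D, z)) else 0
  have hg : F1 (fun p : M × M => g p.1 p.2) := by
    simp only [g, Prod.mk.eta]; infer_instance
  have hglt : ∀ D z, z < y → g D z < k := by
    intro D z _
    simp only [g]
    split_ifs with hq
    · exact hlt _ (hμ1 _ hq).2.1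
    · exact pos_iff.2 hk
  have hgext : ∀ D D', (∀ z, z < y → (val D z = 1 ↔ val D' z = 1)) → ∀ z, z < y → g D z = g D' z := by
    intro D D' hD z _
    have e1 : ∀ q, R (D, z) q ↔ R (D', z) q := by
      intro q
      refine and_congr_right fun _ => and_congr_right fun _ => and_congr_left fun _ => ?_
      exact forall_congr' fun u => imp_congr_right fun hu => by
        show (val D u = 1 ↔ _) ↔ (val D' u = 1 ↔ _)
        rw [hD u hu]
    simp only [g, e1, hμ2 _ _ e1]
  obtain ⟨S0, hS0Y, hS0⟩ := hY (fun z => ∃ l, l < N ∧ val h l = z) inferInstance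
  have hcnt : N ≤ cnt S0 y :=
    cnt_range (a := h) (fun i hi => ⟨h1 i hi, (hS0 _ (h1 i hi)).2 ⟨i, hi, rfl⟩⟩) h2
  obtain ⟨a, ha1, ha2, ha3⟩ := greedy hY hk g hglt hgext n S0 hS0Y (hN ▸ hcnt)
  refine ⟨a, fun l hl => (ha1 l hl).1, ha2, ?_⟩
  intro q hq q' hq' hi hi' hin hin' hag
  have haN : ∀ q, InR e n a q → InR e N h q := by
    intro q hq i hi
    obtain ⟨l, hl, e⟩ := hq i hi
    rw [← e]
    exact (hS0 _ (ha1 l hl).1).1 (ha1 l hl).2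
  obtain ⟨D, hDY, hD⟩ := hY (fun u => ∃ i, i < r ∧ val q i = u) inferInstance
  have hD' : ∀ u, u < y → (val D u = 1 ↔ ∃ i, i < r ∧ val q' i = u) := by
    intro u hu
    rw [hD u hu]
    exact exists_congr fun i => and_congr_right fun hi => by rw [hag i hi]
  have hgq : ∀ q, q < W → Inc e y q → InR e n a q → (∀ u, u < y → (val D u = 1 ↔ ∃ i, i < r ∧ val q i = u)) →
      g D (val q r) = f q := by
    intro q hq hi hin hD
    have hex : ∃ q', q' < W ∧ R (D, val q r) q' := ⟨q, hq, hi, haN q hin, hD, rfl⟩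
    obtain ⟨hw, hinc, hinr, hDD, hz⟩ := hμ1 _ hex
    simp only [g, if_pos hex]
    refine h3 _ hw q hq hinc hi hinr (haN q hin) fun i hir => ?_
    rcases (lt_succ.1 hir).lt_or_eq with hir | rfl
    · refine enum_unique (r := r) (fun i hi => hinc.2 i (hi.trans hr)) (fun i h => hi.2 i (h.trans hr))
        (fun i h => ?_) (fun i h => ?_) i hir
      · have := hinc.1 i (h.trans hr)
        exact (hD _ this).1 ((hDD _ this).2 ⟨i, h, rfl⟩)
      · have := hi.1 i (h.trans hr)
        exact (hDD _ this).1 ((hD _ this).2 ⟨i, h, rfl⟩)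
    · exact hz
  rw [← hgq q hq hi hin hD, ← hgq q' hq' hi' hin' hD']
  refine ha3 D hDY (fun u hu hu1 => ?_) _ (hi.1 r hr) _ (hi'.1 r hr) (hin r hr) (hin' r hr) (fun u hu hu1 => ?_)
    (fun u hu hu1 => ?_)
  · obtain ⟨i, hir, rfl⟩ := (hD u hu).1 hu1
    exact hin i (hir.trans hr)
  · obtain ⟨i, hir, rfl⟩ := (hD u hu).1 hu1
    exact hi.2 r hr i hir
  · obtain ⟨i, hir, rfl⟩ := (hD' u hu).1 hu1
    exact hi'.2 r hr i hir

end Step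

/-- The tower of bounds. -/
noncomputable def TT (k x r : M) : M :=
  recF (fun _ => x) (fun _ _ n => ex (ex k (ex (1 + 1) n) + 1) n * ex k (ex (1 + 1) n)) 0 r
theorem TT_zero (k x : M) : TT k x 0 = x := recF_zero _ _ _
theorem TT_succ (k x r : M) : TT k x (r + 1) =
    ex (ex k (ex (1 + 1) (TT k x r)) + 1) (TT k x r) * ex k (ex (1 + 1) (TT k x r)) := recF_succ _ _ _ _
instance TT_F1 (k x : M) {f : Γ → M} [hf : F1 f] : F1 (fun γ => TT k x (f γ)) :=
  recF_F1 _ _ (f := fun _ => 0) (g := f)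
instance TT_F1' (k x : M) : F1 (fun r => TT k x r) := TT_F1 k x (f := fun r => r)

set_option synthInstance.maxHeartbeats 2000000 in
set_option synthInstance.maxSize 100000 in
set_option maxHeartbeats 4000000 in
theorem main_abs (e k x : M) (hk : 1 ≤ k) : ∃ y : M, ∀ f : M → M, F1 f →
    (∀ q, Inc e y q → f q < k) →
    (∀ q q', Inc e y q → Inc e y q' → (∀ i, i < e → val q i = val q' i) → f q = f q') →
    ∃ h, Inc x y h ∧ ∃ c, ∀ q, Inc e y q → InR e x h q → f q = c := by
  refine ⟨TT k x e, fun f hf hlt hext => ?_⟩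
  generalize hy : TT k x e = y at *
  have hf' : ∀ {Γ : Type} [Env M Γ] {h : Γ → M} [F1 h], F1 (fun γ => f (h γ)) := by
    intro Γ _ f h; exact hf.comp1 h
  obtain ⟨Y, hY⟩ := exists_compr y
  obtain ⟨W, hW⟩ := exists_seq e y
  have key : ∀ j, j ≤ e → ∃ r h, j + r = e ∧ Inc (TT k x r) y h ∧
      ∀ q, q < W → ∀ q', q' < W → Inc e y q → Inc e y q' → InR e (TT k x r) h q → InR e (TT k x r) h q' →
      (∀ i, i < r → val q i = val q' i) → f q = f q' := by
    refine Sig.ind' ?_ ?_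
    · intro _
      obtain ⟨h, hh⟩ := exists_seq' y (fun i => i)
      refine ⟨e, h, zero_add e, ?_, fun q _ q' _ hq hq' _ _ hag => hext q q' hq hq' hag⟩
      rw [hy]
      refine ⟨fun i hi => by rw [hh i hi]; exact hi, fun i hi j hj => ?_⟩
      rw [hh i hi, hh j (hj.trans hi)]; exact hj
    · intro j ih hj
      obtain ⟨r, h, hr, hinc, h3⟩ := ih (le_trans le_self_add hj)
      obtain ⟨r, rfl⟩ : ∃ r', r = r' + 1 := by
        rcases zero_or_succ r with rfl | h
        · rw [add_zero] at hr
          rw [hr] at hj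
          exact absurd (succ_le.1 hj) (lt_irrefl _)
        · exact h
      have hre : r < e := by
        rw [← hr]
        exact lt_of_lt_of_le (lt_self_succ r) le_add_self
      obtain ⟨a, ha1, ha2, ha3⟩ := main_step hY hk f hlt hre (TT_succ k x r) hinc.1 hinc.2 h3
      exact ⟨r, a, by rw [← hr]; ring, ⟨ha1, ha2⟩, ha3⟩
  obtain ⟨r, h, hr, hinc, h3⟩ := key e le_rfl
  have hr0 : r = 0 := by
    apply add_left_cancel (a := e)
    rw [hr, add_zero]
  subst hr0
  rw [TT_zero] at hinc h3
  refine ⟨h, hinc, ?_⟩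
  have hred : ∀ q, Inc e y q → InR e x h q → ∃ q', q' < W ∧ Inc e y q' ∧ InR e x h q' ∧ f q = f q' := by
    intro q hq hqr
    obtain ⟨q', hq'W, hq'⟩ := hW (val q) inferInstance hq.1
    have hv : ∀ i, i < e → val q' i = val q i := fun i hi => val_eq (hq' i hi)
    have hi' : Inc e y q' := by
      refine ⟨fun i hi => by rw [hv i hi]; exact hq.1 i hi, fun i hi j hj => ?_⟩
      rw [hv i hi, hv j (hj.trans hi)]
      exact hq.2 i hi j hj
    exact ⟨q', hq'W, hi', fun i hi => by rw [hv i hi]; exact hqr i hi,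
      hext q q' hq hi' fun i hi => (hv i hi).symm⟩
  by_cases hex : ∃ q, q < W ∧ Inc e y q ∧ InR e x h q
  · obtain ⟨q0, hq0, hi0, hr0⟩ := hex
    refine ⟨f q0, fun q hq hqr => ?_⟩
    obtain ⟨q', hq'W, hi', hr', e'⟩ := hred q hq hqr
    rw [e']
    exact h3 q' hq'W q0 hq0 hi' hi0 hr' hr0 fun i hi => absurd hi (by simp)
  · refine ⟨0, fun q hq hqr => ?_⟩
    obtain ⟨q', hq'W, hi', hr', e'⟩ := hred q hq hqr
    exact absurd ⟨q', hq'W, hi', hr'⟩ hex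

end FRTAbs


namespace FRTAbs

section CodeDefs
variable {M : Type} [Add M] [Mul M] [One M] [LT M]
def CFin (c : M) (X : Set M) (card : M) : Prop :=
  ∃ s, PairC c card s ∧
    (∀ i, i < card → ∃ x, x ∈ X ∧ SeqA s i x) ∧
    (∀ i j x y, i < j → j < card → SeqA s i x → SeqA s j y → x < y) ∧
    (∀ x, x ∈ X ↔ ∃ i, i < card ∧ SeqA s i x)
def CTup (d e y : M) (D : Set M) : Prop := CFin d D e ∧ ∀ z ∈ D, z < y
end CodeDefs

variable {M : Type} [IS1 M]

theorem cfin_of_inc {e y q d : M} (h : Inc e y q) (hd : PairC d e q) :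
    CTup d e y {x | ∃ i, i < e ∧ val q i = x} := by
  refine ⟨⟨q, hd, fun i hi => ⟨val q i, ⟨i, hi, rfl⟩, seqA_val q i⟩, ?_, ?_⟩, ?_⟩
  · intro i j x z hij hj hx hz
    rw [seqA_iff_val] at hx hz
    subst hx hz
    exact h.2 j hj i hij
  · intro x
    simp only [Set.mem_setOf_eq, seqA_iff_val]
  · rintro z ⟨i, hi, rfl⟩
    exact h.1 i hi

theorem inc_of_cfin {e d s y : M} {D : Set M} (hd : PairC d e s) (h : CTup d e y D) :
    Inc e y s ∧ ∀ x, x ∈ D ↔ ∃ i, i < e ∧ val s i = x := by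
  obtain ⟨⟨s', hs', h1, h2, h3⟩, h4⟩ := h
  obtain ⟨-, rfl⟩ := pair_inj hd hs'
  simp only [seqA_iff_val] at h1 h2 h3
  refine ⟨⟨fun i hi => h4 _ ((h3 _).2 ⟨i, hi, rfl⟩), fun i hi j hj => h2 j i _ _ hj hi rfl rfl⟩, h3⟩

theorem frt_abs (e k x : M) (hk : 1 ≤ k) : ∃ y : M, ∀ C : M → M → Prop,
    Sig (fun p : M × M => C p.1 p.2) →
    (∀ d D, CTup d e y D → ∃ i, i < k ∧ C d i) →
    (∀ d d' D i i', CTup d e y D → CTup d' e y D → C d i → C d' i' → i = i') →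
    ∃ (c : M) (H : Set M), CFin c H x ∧ (∀ z ∈ H, z < y) ∧
      ∃ i, ∀ d D, CFin d D e → D ⊆ H → C d i := by
  obtain ⟨y, hy⟩ := main_abs e k x hk
  refine ⟨y, fun C hC hT hU => ?_⟩
  have key : ∀ q, Inc e y q → ∃ z, z < k ∧ ∃ d, PairC d e q ∧ C d z := by
    intro q hq
    obtain ⟨d, hd⟩ := pair_ex e q
    obtain ⟨i, hi, hi'⟩ := hT d _ (cfin_of_inc hq hd)
    exact ⟨i, hi, d, hd, hi'⟩
  choose! f hf using key
  classical
  have uniq : ∀ q q' z z' d d', Inc e y q → Inc e y q' → (∀ i, i < e → val q i = val q' i) →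
      PairC d e q → PairC d' e q' → C d z → C d' z' → z = z' := by
    intro q q' z z' d d' hq hq' hqq hd hd' hz hz'
    refine hU d d' _ z z' (cfin_of_inc hq hd) ?_ hz hz'
    have : {x | ∃ i, i < e ∧ val q i = x} = {x | ∃ i, i < e ∧ val q' i = x} := by
      ext x
      simp only [Set.mem_setOf_eq]
      refine exists_congr fun i => and_congr_right fun hi => ?_
      rw [hqq i hi]
    rw [this]
    exact cfin_of_inc hq' hd'
  let g : M → M := fun q => if Inc e y q then f q else 0
  have hg : ∀ q, Inc e y q → g q = f q := fun q hq => by simp [g, hq]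
  have hF : F1 g := by
    have h1 : Sig (fun p : (M × M) × M => C p.2 p.1.2) := hC.comp2 inferInstance inferInstance
    have h2 : Sig (fun p : (M × M) × M => PairC p.2 e p.1.1) := by
      unfold PairC; infer_instance
    have h3 : Sig (fun p : M × M => Inc e y p.1) := inferInstance
    have h4 : Sig (fun p : M × M => ¬ Inc e y p.1) := inferInstance
    refine F1.ofSig (fun q z => (Inc e y q ∧ ∃ d, PairC d e q ∧ C d z) ∨ (¬ Inc e y q ∧ z = 0))
      inferInstance ?_
    intro q z
    by_cases hq : Inc e y q
    · simp only [hq, true_and, not_true, false_and, or_false, hg q hq]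
      constructor
      · rintro ⟨d, hd, hz⟩
        obtain ⟨-, d', hd', hz'⟩ := hf q hq
        exact uniq q q _ _ d d' hq hq (fun _ _ => rfl) hd hd' hz hz'
      · rintro rfl
        exact (hf q hq).2
    · simp [hq, g]
  obtain ⟨h, hh, c, hc⟩ := hy g hF
    (fun q hq => by rw [hg q hq]; exact (hf q hq).1)
    (fun q q' hq hq' hqq => by
      rw [hg q hq, hg q' hq']
      obtain ⟨-, d, hd, hz⟩ := hf q hq
      obtain ⟨-, d', hd', hz'⟩ := hf q' hq'
      exact uniq q q' _ _ d d' hq hq' hqq hd hd' hz hz')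
  obtain ⟨c0, hc0⟩ := pair_ex x h
  obtain ⟨a1, a2⟩ := cfin_of_inc hh hc0
  refine ⟨c0, _, a1, a2, c, ?_⟩
  intro d D hD hDH
  have hD' : CTup d e y D := ⟨hD, fun z hz => a2 z (hDH hz)⟩
  obtain ⟨s, hs, -⟩ := id hD
  obtain ⟨b1, b2⟩ := inc_of_cfin hs hD'
  have := hc s b1 (fun i hi => hDH ((b2 _).2 ⟨i, hi, rfl⟩))
  rw [hg s b1] at this
  obtain ⟨-, d', hd', hz'⟩ := hf s b1
  have e1 : d = d' := by
    unfold PairC at hs hd'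
    exact add_self_inj (hs.trans hd'.symm)
  rw [e1, ← this]
  exact hz'

end FRTAbs


namespace FRTAbs
open ArithFC
variable {M : Type} [lang.Structure M]

theorem funMap_zero (xs : Fin 0 → M) : Structure.funMap (L := lang) Func.zero xs = (0 : M) :=
  congrArg _ (Subsingleton.elim _ _)
theorem funMap_one (xs : Fin 0 → M) : Structure.funMap (L := lang) Func.one xs = (1 : M) :=
  congrArg _ (Subsingleton.elim _ _)
theorem vec2_eta {A : Type} (xs : Fin 2 → A) : xs = ![xs 0, xs 1] := by
  funext i; fin_cases i <;> rfl
theorem funMap_add (xs : Fin 2 → M) : Structure.funMap (L := lang) Func.add xs = xs 0 + xs 1 :=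
  congrArg _ (vec2_eta xs)
theorem funMap_mul (xs : Fin 2 → M) : Structure.funMap (L := lang) Func.mul xs = xs 0 * xs 1 :=
  congrArg _ (vec2_eta xs)
theorem relMap_lt (xs : Fin 2 → M) : Structure.RelMap (L := lang) Rel.lt xs ↔ xs 0 < xs 1 :=
  iff_of_eq (congrArg _ (vec2_eta xs))

theorem ltFm_realize {α : Type} {n : ℕ} (t u : lang.Term (α ⊕ Fin n)) (v : α → M) (xs : Fin n → M) :
    (ltFm t u).Realize v xs ↔ t.realize (Sum.elim v xs) < u.realize (Sum.elim v xs) := by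
  refine (relMap_lt _).trans ?_
  rfl

theorem bdAll_realize {α : Type} {n : ℕ} (t : lang.Term (α ⊕ Fin n))
    (φ : lang.BoundedFormula α (n + 1)) (v : α → M) (xs : Fin n → M) :
    (BoundedFormula.all ((ltFm (Term.var (Sum.inr (Fin.last n))) (t.liftAt 1 n)).imp φ)).Realize v xs
      ↔ ∀ z, z < t.realize (Sum.elim v xs) → φ.Realize v (Fin.snoc (α := fun _ => M) xs z) := by
  rw [BoundedFormula.realize_all]
  refine forall_congr' fun z => ?_
  rw [BoundedFormula.realize_imp, ltFm_realize]
  have e2 : (t.liftAt 1 n).realize (Sum.elim v (Fin.snoc (α := fun _ => M) xs z))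
      = t.realize (Sum.elim v xs) := by
    rw [Term.realize_liftAt]
    congr 1
    funext a
    rcases a with a | i
    · rfl
    · simp [Fin.castAdd]
      exact Fin.snoc_castSucc (α := fun _ => M) z xs i
  rw [e2]
  simp

/-! ### From formulas to semantic predicates -/

theorem vtm_of_term {β : Type} {N : ℕ} (T : lang.Term β) (τ : β → (Fin N → M) → M)
    (hτ : ∀ a, VTm M N (τ a)) : VTm M N (fun v => T.realize (fun a => τ a v)) := by
  induction T with
  | var a => exact hτ a
  | @func l f ts ih =>
    simp only [Term.realize_func]
    cases f with
    | zero => simp only [funMap_zero]; exact .const _ _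
    | one => simp only [funMap_one]; exact .const _ _
    | add => simp only [funMap_add]; exact .add _ (ih 0) (ih 1)
    | mul => simp only [funMap_mul]; exact .mul _ (ih 0) (ih 1)

theorem sumElim_eta {M α : Type} {n : ℕ} {X : Type} (τ : α ⊕ Fin n → X → M) (x : X) :
    Sum.elim (fun a => τ (.inl a) x) (fun i => τ (.inr i) x) = fun a => τ a x := by
  funext a; cases a <;> rfl

theorem vd0_of_delta0 {α : Type} {n : ℕ} {φ : lang.BoundedFormula α n} (h : IsDelta0 n φ) :
    ∀ {N : ℕ} (τ : α ⊕ Fin n → (Fin N → M) → M), (∀ a, VTm M N (τ a)) →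
    VD0 M N (fun v => φ.Realize (fun a => τ (.inl a) v) (fun i => τ (.inr i) v)) := by
  induction h with
  | falsum n => intro N τ hτ; exact .fls _
  | equal n t u =>
    intro N τ hτ
    have := VD0.eq _ (vtm_of_term t τ hτ) (vtm_of_term u τ hτ)
    simp only [BoundedFormula.Realize, sumElim_eta]
    exact this
  | rel n l R ts =>
    intro N τ hτ
    cases R
    have := VD0.lt _ (vtm_of_term (ts 0) τ hτ) (vtm_of_term (ts 1) τ hτ)
    simp only [BoundedFormula.Realize, sumElim_eta, relMap_lt]
    exact this
  | imp n _ _ h1 h2 => intro N τ hτ; exact .imp _ (h1 τ hτ) (h2 τ hτ)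
  | @bdAll n t φ _ ih =>
    intro N τ hτ
    simp only [bdAll_realize, sumElim_eta]
    have h1 := vtm_of_term t τ hτ
    have h2 := ih (N := N + 1)
      (Sum.elim (fun a v => τ (.inl a) (fun i => v i.castSucc))
        (fun i v => Fin.snoc (α := fun _ => M) (fun j => τ (.inr j) (fun i => v i.castSucc)) (v (Fin.last N)) i))
      (by
        rintro (a | i)
        · exact (hτ (.inl a)).lift
        · refine Fin.lastCases ?_ (fun j => ?_) i
          · simpa using VTm.var (M := M) _ _
          · simpa using (hτ (.inr j)).lift)
    have := VD0.ball _ h1 h2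
    simpa using this

/-! ### From semantic predicates to formulas -/

theorem term_of_vtm {N : ℕ} {t : (Fin N → M) → M} (h : VTm M N t) :
    ∃ L : List M, ∀ (p : ℕ) (w : Fin p → M), (∀ c ∈ L, ∃ j, w j = c) →
      ∀ (k n : ℕ) (ι : Fin N → Fin k ⊕ Fin n), ∃ T : lang.Term ((Fin k ⊕ Fin p) ⊕ Fin n),
        ∀ u v, T.realize (Sum.elim (Sum.elim u w) v) = t (fun i => Sum.elim u v (ι i)) := by
  induction h with
  | var i =>
    refine ⟨[], fun p w _ k n ι => ?_⟩
    rcases hi : ι i with a | a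
    · exact ⟨Term.var (.inl (.inl a)), fun u v => by simp [hi]⟩
    · exact ⟨Term.var (.inr a), fun u v => by simp [hi]⟩
  | const c =>
    refine ⟨[c], fun p w hw k n ι => ?_⟩
    obtain ⟨j, hj⟩ := hw c (by simp)
    exact ⟨Term.var (.inl (.inr j)), fun u v => by simp [hj]⟩
  | add _ _ h1 h2 =>
    obtain ⟨L1, h1⟩ := h1
    obtain ⟨L2, h2⟩ := h2
    refine ⟨L1 ++ L2, fun p w hw k n ι => ?_⟩
    obtain ⟨T1, e1⟩ := h1 p w (fun c hc => hw c (by simp [hc])) k n ι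
    obtain ⟨T2, e2⟩ := h2 p w (fun c hc => hw c (by simp [hc])) k n ι
    refine ⟨Term.func (L := lang) Func.add ![T1, T2], fun u v => ?_⟩
    refine (funMap_add _).trans ?_
    exact congrArg₂ _ (e1 u v) (e2 u v)
  | mul _ _ h1 h2 =>
    obtain ⟨L1, h1⟩ := h1
    obtain ⟨L2, h2⟩ := h2
    refine ⟨L1 ++ L2, fun p w hw k n ι => ?_⟩
    obtain ⟨T1, e1⟩ := h1 p w (fun c hc => hw c (by simp [hc])) k n ι
    obtain ⟨T2, e2⟩ := h2 p w (fun c hc => hw c (by simp [hc])) k n ι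
    refine ⟨Term.func (L := lang) Func.mul ![T1, T2], fun u v => ?_⟩
    refine (funMap_mul _).trans ?_
    exact congrArg₂ _ (e1 u v) (e2 u v)

theorem delta0_of_vd0 {N : ℕ} {P : (Fin N → M) → Prop} (h : VD0 M N P) :
    ∃ L : List M, ∀ (p : ℕ) (w : Fin p → M), (∀ c ∈ L, ∃ j, w j = c) →
      ∀ (k n : ℕ) (ι : Fin N → Fin k ⊕ Fin n), ∃ φ : lang.BoundedFormula (Fin k ⊕ Fin p) n,
        IsDelta0 n φ ∧
        ∀ u v, φ.Realize (Sum.elim u w) v ↔ P (fun i => Sum.elim u v (ι i)) := by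
  induction h with
  | fls N => exact ⟨[], fun p w _ k n ι => ⟨_, .falsum n, fun u v => Iff.rfl⟩⟩
  | eq N h1 h2 =>
    obtain ⟨L1, h1⟩ := term_of_vtm h1
    obtain ⟨L2, h2⟩ := term_of_vtm h2
    refine ⟨L1 ++ L2, fun p w hw k n ι => ?_⟩
    obtain ⟨T1, e1⟩ := h1 p w (fun c hc => hw c (by simp [hc])) k n ι
    obtain ⟨T2, e2⟩ := h2 p w (fun c hc => hw c (by simp [hc])) k n ι
    refine ⟨_, .equal n T1 T2, fun u v => ?_⟩
    simp only [BoundedFormula.Realize, e1, e2]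
  | lt N h1 h2 =>
    obtain ⟨L1, h1⟩ := term_of_vtm h1
    obtain ⟨L2, h2⟩ := term_of_vtm h2
    refine ⟨L1 ++ L2, fun p w hw k n ι => ?_⟩
    obtain ⟨T1, e1⟩ := h1 p w (fun c hc => hw c (by simp [hc])) k n ι
    obtain ⟨T2, e2⟩ := h2 p w (fun c hc => hw c (by simp [hc])) k n ι
    refine ⟨ltFm T1 T2, .rel n 2 _ _, fun u v => ?_⟩
    rw [ltFm_realize, e1, e2]
  | imp N _ _ h1 h2 =>
    obtain ⟨L1, h1⟩ := h1
    obtain ⟨L2, h2⟩ := h2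
    refine ⟨L1 ++ L2, fun p w hw k n ι => ?_⟩
    obtain ⟨T1, d1, e1⟩ := h1 p w (fun c hc => hw c (by simp [hc])) k n ι
    obtain ⟨T2, d2, e2⟩ := h2 p w (fun c hc => hw c (by simp [hc])) k n ι
    refine ⟨_, .imp n d1 d2, fun u v => ?_⟩
    rw [BoundedFormula.realize_imp, e1, e2]
  | @ball N t P h1 _ h2 =>
    obtain ⟨L1, h1⟩ := term_of_vtm h1
    obtain ⟨L2, h2⟩ := h2
    refine ⟨L1 ++ L2, fun p w hw k n ι => ?_⟩
    obtain ⟨T1, e1⟩ := h1 p w (fun c hc => hw c (by simp [hc])) k n ι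
    obtain ⟨T2, d2, e2⟩ := h2 p w (fun c hc => hw c (by simp [hc])) k (n + 1)
      (Fin.snoc (α := fun _ => Fin k ⊕ Fin (n + 1)) (fun i => Sum.map id Fin.castSucc (ι i))
        (.inr (Fin.last n)))
    refine ⟨_, .bdAll n T1 d2, fun u v => ?_⟩
    rw [bdAll_realize, e1]
    refine forall_congr' fun z => imp_congr_right fun _ => ?_
    rw [e2]
    refine iff_of_eq (congrArg P ?_)
    funext i
    refine Fin.lastCases ?_ (fun j => ?_) i
    · simp
    · rcases hj : ι j with a | a <;> simp [hj]

theorem ind_of_isig (hI : ISig 1 M) (P : (Fin 2 → M) → Prop) (hP : VD0 M 2 P)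
    (h0 : ∃ z, P ![0, z]) (hs : ∀ x, (∃ z, P ![x, z]) → ∃ z, P ![x + 1, z]) :
    ∀ x, ∃ z, P ![x, z] := by
  refine hI {x | ∃ z, P ![x, z]} ?_ h0 hs
  obtain ⟨L, hL⟩ := delta0_of_vd0 hP
  obtain ⟨φ, d, hφ⟩ := hL L.length L.get
    (fun c hc => by
      obtain ⟨i, hi⟩ := List.mem_iff_get.1 hc
      exact ⟨i, hi⟩) 1 1 ![.inl 0, .inr 0]
  refine ⟨L.length, φ.ex, L.get, SigmaFm.ex 0 0 (SigmaFm.delta0 1 1 d), fun v => ?_⟩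
  rw [BoundedFormula.realize_ex]
  refine exists_congr fun z => ?_
  rw [hφ]
  refine iff_of_eq (congrArg P ?_)
  funext i
  fin_cases i <;> rfl

/-! ### The structure -/

theorem le_add_left_aux (h : PAm M) (x y : M) : x ≤ y + x := by
  rcases h.zero_le y with h1 | h1
  · have h2 := h.add_lt_add 0 y x h1
    rw [h.add_comm 0, h.add_zero] at h2
    exact .inl h2
  · refine .inr ?_
    rw [← h1, h.add_comm 0, h.add_zero]

@[reducible] noncomputable def mkIS1 (h : PAm M) (hI : ISig 1 M) : IS1 M where
  add := (· + ·)
  mul := (· * ·)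
  zero := 0
  one := 1
  lt := (· < ·)
  le := (· ≤ ·)
  add_assoc := h.add_assoc
  add_comm := h.add_comm
  add_zero := h.add_zero
  zero_add := fun x => by rw [h.add_comm, h.add_zero]
  nsmul := nsmulRec
  mul_assoc := h.mul_assoc
  mul_comm := h.mul_comm
  mul_zero := h.mul_zero
  zero_mul := fun x => by rw [h.mul_comm, h.mul_zero]
  mul_one := h.mul_one
  one_mul := fun x => by rw [h.mul_comm, h.mul_one]
  left_distrib := h.ldistrib
  right_distrib := fun x y z => by
    rw [h.mul_comm, h.ldistrib, h.mul_comm z x, h.mul_comm z y]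
  le_refl := fun x => Or.inr rfl
  le_trans := by
    rintro x y z (h1 | rfl) (h2 | rfl)
    · exact .inl (h.lt_trans _ _ _ h1 h2)
    · exact .inl h1
    · exact .inl h2
    · exact .inr rfl
  lt_iff_le_not_ge := by
    intro x y
    constructor
    · intro h1
      refine ⟨.inl h1, ?_⟩
      rintro (h2 | rfl)
      · exact h.lt_irrefl _ (h.lt_trans _ _ _ h1 h2)
      · exact h.lt_irrefl _ h1
    · rintro ⟨h1 | rfl, h2⟩
      · exact h1
      · exact absurd (.inr rfl) h2
  le_antisymm := by
    rintro x y (h1 | rfl) (h2 | h2)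
    · exact absurd (h.lt_trans _ _ _ h1 h2) (h.lt_irrefl _)
    · exact h2.symm
    · rfl
    · rfl
  le_total := by
    intro x y
    rcases h.lt_total x y with h | h | h
    · exact .inl (.inl h)
    · exact .inl (.inr h)
    · exact .inr (.inl h)
  toDecidableLE := Classical.decRel _
  add_le_add_left := by
    rintro x y (h1 | rfl) z
    · exact .inl (h.add_lt_add _ _ _ h1)
    · exact .inr rfl
  le_of_add_le_add_left := by
    intro z x y h1
    rcases h.lt_total x y with h2 | h2 | h2
    · exact .inl h2
    · exact .inr h2
    · have h3 := h.add_lt_add _ _ z h2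
      rw [h.add_comm y, h.add_comm x] at h3
      rcases h1 with h1 | h1
      · exact absurd (h.lt_trans _ _ _ h1 h3) (h.lt_irrefl _)
      · exact absurd (show z + x < z + x from h1.symm ▸ h3) (h.lt_irrefl _)
  zero_le_one := .inl h.zero_lt_one
  exists_pair_ne := ⟨0, 1, fun e => h.lt_irrefl 0 (e ▸ h.zero_lt_one)⟩
  mul_lt_mul_of_pos_left := fun a ha b c hbc => by
    have := h.mul_lt_mul b c a hbc ha
    rw [h.mul_comm b, h.mul_comm c] at this
    exact this
  mul_lt_mul_of_pos_right := fun a ha b c hbc => h.mul_lt_mul b c a hbc ha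
  exists_add_of_le := by
    rintro x y (h1 | rfl)
    · obtain ⟨z, hz⟩ := h.sub_exists x y h1
      exact ⟨z, hz.symm⟩
    · exact ⟨0, (h.add_zero x).symm⟩
  le_add_self := le_add_left_aux h
  le_self_add := fun x y => by
    have := le_add_left_aux h x y
    rw [h.add_comm] at this
    exact this
  lt_one := by
    intro x hx
    rcases h.zero_le x with h1 | h1
    · rcases h.discrete x h1 with h2 | h2
      · exact absurd (h.lt_trans _ _ _ hx h2) (h.lt_irrefl _)
      · exact absurd (h2 ▸ hx) (h.lt_irrefl _)
    · exact h1.symm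
  ind := ind_of_isig hI

theorem sig_of_sigmaFm (hPA : PAm M) (hI : ISig 1 M) {α : Type} {n : ℕ}
    {φ : lang.BoundedFormula α n} (h : SigmaFm 1 n φ) :
    letI := mkIS1 hPA hI
    ∀ (Γ : Type) (_ : Env M Γ) (τ : α ⊕ Fin n → Γ → M), (∀ a, Tm (τ a)) →
      Sig (fun γ => φ.Realize (fun a => τ (.inl a) γ) (fun i => τ (.inr i) γ)) := by
  letI I := mkIS1 hPA hI
  have base : ∀ {n : ℕ} {φ : lang.BoundedFormula α n}, IsDelta0 n φ →
      ∀ (Γ : Type) (_ : Env M Γ) (τ : α ⊕ Fin n → Γ → M), (∀ a, Tm (τ a)) →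
      Sig (fun γ => φ.Realize (fun a => τ (.inl a) γ) (fun i => τ (.inr i) γ)) := by
    intro n φ hd Γ _ τ hτ
    choose f hf ef using hτ
    have := vd0_of_delta0 hd f hf
    refine Sig.ofD0 ⟨_, this, fun γ => ?_⟩
    simp only [ef]
  refine SigmaFm.rec
    (motive_1 := fun m n φ _ => m = 1 → ∀ (Γ : Type) (_ : Env M Γ) (τ : α ⊕ Fin n → Γ → M),
      (∀ a, Tm (τ a)) →
      Sig (fun γ => φ.Realize (fun a => τ (.inl a) γ) (fun i => τ (.inr i) γ)))
    (motive_2 := fun m n φ _ => m = 0 → IsDelta0 n φ)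
    ?_ ?_ ?_ ?_ ?_ ?_ h rfl
  · intro m n φ hd _
    exact base hd
  · intro m n φ _ ih hm
    exact base (ih (by omega))
  · intro m n φ _ ih hm Γ _ τ hτ
    simp only [BoundedFormula.realize_ex]
    refine Sig.ex (P := fun γ z => φ.Realize (fun a => τ (.inl a) γ)
      (Fin.snoc (α := fun _ => M) (fun i => τ (.inr i) γ) z)) ?_
    have := ih hm (Γ × M) inferInstance
      (Sum.elim (fun a p => τ (.inl a) p.1)
        (fun i p => Fin.snoc (α := fun _ => M) (fun j => τ (.inr j) p.1) p.2 i))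
      (by
        rintro (a | i)
        · exact (hτ (.inl a)).fst
        · refine Fin.lastCases ?_ (fun j => ?_) i
          · simpa using Tm.snd
          · simpa using (hτ (.inr j)).fst)
    simpa using this
  · intro m n φ hd _
    exact hd
  · intro m n φ _ _ hm
    omega
  · intro m n φ _ _ hm
    omega

theorem sig_of_sigmaDef2 (hPA : PAm M) (hI : ISig 1 M) {C : M → M → Prop} (hC : SigmaDef2 1 M C) :
    letI := mkIS1 hPA hI
    Sig (fun p : M × M => C p.1 p.2) := by
  letI I := mkIS1 hPA hI
  obtain ⟨p, φ, w, hφ, e⟩ := hC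
  have := sig_of_sigmaFm hPA hI hφ (M × M) inferInstance
    (Sum.elim (Sum.elim (fun i q => ![q.1, q.2] i) (fun j _ => w j)) (fun i => i.elim0))
    (by
      rintro ((a | a) | a)
      · fin_cases a
        · exact Tm.base.fst
        · exact Tm.snd
      · exact Tm.const _
      · exact a.elim0)
  refine this.congr fun q => ?_
  refine (e ![q.1, q.2]).trans (iff_of_eq ?_)
  congr 1
  · funext a
    rcases a with a | a <;> rfl
  · exact Subsingleton.elim _ _

end FRTAbs

namespace ArithFC

/-- PA⁻ + IΣ₁ proves FRT^{<ω}(Σ₁): in every model of PA⁻ + IΣ₁,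
for all `e ≥ 1`, `k ≥ 1` and `x` there is `y` such that every Σ₁-definable
`k`-coloring of `[y]^e` has an M-finite homogeneous set of cardinality `x`. -/
theorem statement_2 (M : Type) [lang.Structure M] (hPA : PAm M) (hI : ISig 1 M) :
    ∀ e k : M, (1 : M) ≤ e → (1 : M) ≤ k → FRT M 1 e k := by
  intro e k _ hk x
  obtain ⟨y, hy⟩ := @FRTAbs.frt_abs M (FRTAbs.mkIS1 hPA hI) e k x hk
  exact ⟨y, fun C hC => hy C (FRTAbs.sig_of_sigmaDef2 hPA hI hC.1) hC.2.1 hC.2.2⟩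

end ArithFC
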